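/- arXiv:1107.0123 — 2 statements merged into one kernel-verified Lean document; each statement's English description precedes it below -/
import Mathlib

section
/- Let S = {S_1,…,S_K} be a finite set of complex d×d matrices. Then S has the spectral finiteness property (i.e., there exist n ≥ 1 and a word (i_1,…,i_n) in {1,…,K}^n with ρ(S) = ρ(S_{i_1}⋯S_{i_n})^{1/n}) if and only if there exists a θ-ergodic Borel probability measure μ_* on Σ_K^+ which is extremal for S and which has at least one periodic density point ξ ∈ Σ_K^+. -/
open Filter MeasureTheory Topology
open scoped ENNReal

noncomputable section

/-- The one-sided shift on `Σ_K^+ = ℕ → Fin K`. -/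
def shift (K : ℕ) : (ℕ → Fin K) → ℕ → Fin K := fun i n => i (n + 1)

/-- The ordered product `S_{w 0} ⋯ S_{w (n-1)}` along a finite word `w`. -/
def finWordProd {d K : ℕ} (S : Fin K → Matrix (Fin d) (Fin d) ℂ) {n : ℕ}
    (w : Fin n → Fin K) : Matrix (Fin d) (Fin d) ℂ :=
  (List.ofFn fun t => S (w t)).prod

/-- The ordered product of the first `n` matrices along an infinite sequence. -/
def wordProd {d K : ℕ} (S : Fin K → Matrix (Fin d) (Fin d) ℂ)
    (i : ℕ → Fin K) (n : ℕ) : Matrix (Fin d) (Fin d) ℂ :=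
  (List.ofFn fun t : Fin n => S (i t)).prod

/-- The (usual) spectral radius of a complex matrix, as a real number. -/
def specRad {d : ℕ} (A : Matrix (Fin d) (Fin d) ℂ) : ℝ :=
  (spectralRadius ℂ A).toReal

/-- The generalized spectral radius of a finite family of matrices. -/
def genSpecRad {d K : ℕ} (S : Fin K → Matrix (Fin d) (Fin d) ℂ) : ℝ :=
  Filter.atTop.limsup fun n : ℕ =>
    ⨆ w : Fin n → Fin K, specRad (finWordProd S w) ^ ((n : ℝ)⁻¹)

/-- A submultiplicative matrix norm on `d × d` complex matrices. -/
structure MatrixNorm (d : ℕ) where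
  N : Matrix (Fin d) (Fin d) ℂ → ℝ
  nonneg : ∀ A, 0 ≤ N A
  definite : ∀ A, N A = 0 ↔ A = 0
  homog : ∀ (c : ℂ) (A), N (c • A) = ‖c‖ * N A
  triangle : ∀ A B, N (A + B) ≤ N A + N B
  submult : ∀ A B, N (A * B) ≤ N A * N B

/-- `μ` is extremal for `S` (w.r.t. the matrix norm `N`). -/
def IsExtremal {d K : ℕ} (S : Fin K → Matrix (Fin d) (Fin d) ℂ)
    (N : Matrix (Fin d) (Fin d) ℂ → ℝ) (μ : Measure (ℕ → Fin K)) : Prop :=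
  ∀ᵐ i ∂μ, Tendsto (fun n : ℕ => N (wordProd S i n) ^ ((n : ℝ)⁻¹))
    atTop (𝓝 (genSpecRad S))

/-- `x` is a density point of `μ`. -/
def DensityPoint {K : ℕ} (μ : Measure (ℕ → Fin K)) (x : ℕ → Fin K) : Prop :=
  ∀ U : Set (ℕ → Fin K), IsOpen U → x ∈ U → 0 < μ U

/-- `S` has the spectral finiteness property. -/
def HasFinitenessProperty {d K : ℕ} (S : Fin K → Matrix (Fin d) (Fin d) ℂ) : Prop :=
  ∃ n : ℕ, 1 ≤ n ∧ ∃ w : Fin n → Fin K,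
    genSpecRad S = specRad (finWordProd S w) ^ ((n : ℝ)⁻¹)

/-- `x` is periodic of period `π ≥ 1`. -/
def IsPeriodic {K : ℕ} (x : ℕ → Fin K) (π : ℕ) : Prop :=
  1 ≤ π ∧ ∀ n, x (n + π) = x n

/-- The ordered product `a 0 * ⋯ * a (n - 1)`. -/
def seqProd {R : Type*} [Monoid R] (a : ℕ → R) : ℕ → R
  | 0 => 1
  | n + 1 => seqProd a n * a n

section SeqProd

variable {R : Type*} [Monoid R]

@[simp] lemma seqProd_zero (a : ℕ → R) : seqProd a 0 = 1 := rfl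

lemma seqProd_succ (a : ℕ → R) (n : ℕ) : seqProd a (n + 1) = seqProd a n * a n := rfl

lemma seqProd_add (a : ℕ → R) (m n : ℕ) :
    seqProd a (m + n) = seqProd a m * seqProd (fun k => a (m + k)) n := by
  induction n with
  | zero => simp
  | succ n ih => rw [← add_assoc, seqProd_succ, ih, seqProd_succ, mul_assoc]

lemma seqProd_mul (a : ℕ → R) (L n : ℕ) :
    seqProd a (L * n) = seqProd (fun j => seqProd (fun k => a (j * n + k)) n) L := by
  induction L with
  | zero => simp
  | succ L ih => rw [Nat.succ_mul, seqProd_add, ih, seqProd_succ]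

lemma seqProd_congr {a b : ℕ → R} {n : ℕ} (h : ∀ k < n, a k = b k) :
    seqProd a n = seqProd b n := by
  induction n with
  | zero => rfl
  | succ n ih =>
    rw [seqProd_succ, seqProd_succ, ih fun k hk => h k (by omega), h n (by omega)]

lemma seqProd_const (x : R) (n : ℕ) : seqProd (fun _ => x) n = x ^ n := by
  induction n with
  | zero => simp
  | succ n ih => rw [seqProd_succ, ih, pow_succ]

lemma seqProd_mem (Γ : Submonoid R) {a : ℕ → R} (h : ∀ k, a k ∈ Γ) (n : ℕ) :
    seqProd a n ∈ Γ := by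
  induction n with
  | zero => exact Γ.one_mem
  | succ n ih => exact Γ.mul_mem ih (h n)

lemma map_seqProd {R' F : Type*} [Monoid R'] [FunLike F R R'] [MonoidHomClass F R R']
    (f : F) (a : ℕ → R) (n : ℕ) : f (seqProd a n) = seqProd (fun k => f (a k)) n := by
  induction n with
  | zero => simp
  | succ n ih => simp [seqProd_succ, ih]

/-- Over a period, products along a periodic sequence are powers. -/
lemma seqProd_mul_of_periodic {a : ℕ → R} {p : ℕ} (h : ∀ n, a (n + p) = a n) (k : ℕ) :
    seqProd a (k * p) = seqProd a p ^ k := by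
  rw [seqProd_mul, ← seqProd_const]
  congr 1
  funext j
  refine congrArg (fun b : ℕ → R => seqProd b p) (funext fun r => ?_)
  induction j with
  | zero => simp
  | succ j ih => rw [← ih, ← h (j * p + r)]; congr 1; ring

lemma seqProd_smul {𝕜 R : Type*} [CommSemiring 𝕜] [Semiring R] [Algebra 𝕜 R] (c : 𝕜)
    (a : ℕ → R) (n : ℕ) : seqProd (fun k => c • a k) n = c ^ n • seqProd a n := by
  induction n with
  | zero => simp
  | succ n ih => rw [seqProd_succ, ih, seqProd_succ, smul_mul_smul_comm, pow_succ]

end SeqProd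

lemma norm_seqProd_sub_le {R : Type*} [NormedRing R] {f g : ℕ → R} {b η : ℝ}
    (L : ℕ) (hf : ∀ j < L, ‖f j‖ ≤ b) (hg : ∀ j < L, ‖g j‖ ≤ b)
    (hfg : ∀ j < L, ‖f j - g j‖ ≤ η) (c : ℝ) (hb : 1 ≤ b) (hc : ‖(1 : R)‖ ≤ c) :
    b * ‖seqProd f L - seqProd g L‖ ≤ c * (L * η * b ^ L) := by
  have hb0 : 0 ≤ b := by linarith
  have hc0 : 0 ≤ c := (norm_nonneg _).trans hc
  have hgL : ∀ n ≤ L, ‖seqProd g n‖ ≤ c * b ^ n := by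
    intro n
    induction n with
    | zero => intro _; simpa using hc
    | succ n ih =>
      intro hn
      rw [seqProd_succ, pow_succ, ← mul_assoc]
      exact (norm_mul_le _ _).trans
        (mul_le_mul (ih (by omega)) (hg n (by omega)) (norm_nonneg _) (by positivity))
  induction L with
  | zero => simp
  | succ L ih =>
    have h1 := ih (fun j hj => hf j (by omega)) (fun j hj => hg j (by omega))
      (fun j hj => hfg j (by omega)) (fun n hn => hgL n (by omega))
    have e : seqProd f (L + 1) - seqProd g (L + 1)
        = (seqProd f L - seqProd g L) * f L + seqProd g L * (f L - g L) := by
      rw [seqProd_succ, seqProd_succ]; noncomm_ring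
    have h2 : ‖seqProd f (L + 1) - seqProd g (L + 1)‖
        ≤ ‖seqProd f L - seqProd g L‖ * b + c * b ^ L * η := by
      rw [e]
      refine (norm_add_le _ _).trans (add_le_add ?_ ?_)
      · exact (norm_mul_le _ _).trans
          (mul_le_mul_of_nonneg_left (hf L (by omega)) (norm_nonneg _))
      · exact (norm_mul_le _ _).trans
          (mul_le_mul (hgL L (by omega)) (hfg L (by omega)) (norm_nonneg _) (by positivity))
    calc b * ‖seqProd f (L + 1) - seqProd g (L + 1)‖
        ≤ b * (‖seqProd f L - seqProd g L‖ * b + c * b ^ L * η) :=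
          mul_le_mul_of_nonneg_left h2 hb0
      _ = (b * ‖seqProd f L - seqProd g L‖) * b + c * b ^ (L + 1) * η := by ring
      _ ≤ (c * (L * η * b ^ L)) * b + c * b ^ (L + 1) * η := by gcongr
      _ = c * ((L + 1 : ℕ) * η * b ^ (L + 1)) := by push_cast; ring

section TraceForm

variable {R : Type*} [Ring R] [Algebra ℂ R]

/-- The radical of the trace form `(x, y) ↦ tr (x * y)`, as an ideal. -/
def traceRadical (tr : R →ₗ[ℂ] ℂ) (htr : ∀ x y, tr (x * y) = tr (y * x)) : Ideal R where
  carrier := {x | ∀ y, tr (x * y) = 0}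
  zero_mem' := by simp
  add_mem' := by
    intro a b ha hb y
    rw [add_mul, map_add, ha, hb, add_zero]
  smul_mem' := by
    intro c x hx y
    rw [smul_eq_mul, mul_assoc, htr, mul_assoc]
    exact hx _

lemma exists_seqProd_eq_zero [FiniteDimensional ℂ R] (tr : R →ₗ[ℂ] ℂ)
    (htr : ∀ x y, tr (x * y) = tr (y * x))
    (hnil : ∀ x, (∀ y, tr (x * y) = 0) → IsNilpotent x) :
    ∃ L : ℕ, ∀ g : ℕ → R, (∀ j y, tr (g j * y) = 0) → seqProd g L = 0 := by
  have : IsArtinianRing R := IsArtinianRing.of_finite ℂ R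
  obtain ⟨L, hL⟩ := IsArtinianRing.isNilpotent_jacobson_bot (R := R)
  have hle : traceRadical tr htr ≤ Ideal.jacobson ⊥ := by
    intro x hx
    rw [Ideal.mem_jacobson_iff]
    intro y
    have hyx : y * x ∈ traceRadical tr htr := Ideal.mul_mem_left _ _ hx
    obtain ⟨v, hv⟩ := (hnil _ hyx).isUnit_one_add
    refine ⟨(v⁻¹ : Rˣ), ?_⟩
    have : ((v⁻¹ : Rˣ) : R) * (1 + y * x) = 1 := by rw [← hv]; simp
    rw [Ideal.mem_bot, mul_assoc]
    rw [mul_add, mul_one] at this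
    rw [add_comm, this, sub_self]
  refine ⟨L, fun g hg => ?_⟩
  have key : ∀ n, seqProd g n ∈ (Ideal.jacobson (⊥ : Ideal R)) ^ n := by
    intro n
    induction n with
    | zero => simp [Submodule.pow_zero, Ideal.one_eq_top]
    | succ n ih =>
      rw [seqProd_succ, Submodule.pow_succ]
      exact Ideal.mul_mem_mul ih (hle (hg n))
  have := key L
  rw [hL] at this
  simpa using this

end TraceForm

section Span

variable {R : Type*} [NormedRing R] [NormedAlgebra ℂ R] [FiniteDimensional ℂ R]

lemma exists_finite_spanning (Γ : Set R) (hspan : Submodule.span ℂ Γ = ⊤) :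
    ∃ (r : ℕ) (b : Module.Basis (Fin r) ℂ R), ∀ j, b j ∈ Γ := by
  obtain ⟨f, hf, hs, hli⟩ := Submodule.exists_fun_fin_finrank_span_eq ℂ Γ
  exact ⟨_, Module.Basis.mk hli (by rw [hs, hspan]), fun j => by simpa using hf j⟩

/-- Small elements are small combinations of elements of `Γ`, as seen by linear functionals. -/
lemma exists_forall_norm_apply_le_half (Γ : Submonoid R)
    (hspan : Submodule.span ℂ (Γ : Set R) = ⊤) :
    ∃ δ > 0, ∀ x : R, ‖x‖ ≤ δ → ∀ (φ : R →ₗ[ℂ] ℂ) (M : ℝ),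
      (∀ y ∈ Γ, ‖φ y‖ ≤ M) → ‖φ x‖ ≤ M / 2 := by
  obtain ⟨r, b, hb⟩ := exists_finite_spanning (Γ : Set R) hspan
  set e := LinearMap.toContinuousLinearMap (b.equivFun : R →ₗ[ℂ] (Fin r → ℂ)) with he
  refine ⟨1 / (2 * (r * ‖e‖ + 1)), by positivity, fun x hx φ M hM => ?_⟩
  have hM0 : 0 ≤ M := (norm_nonneg _).trans (hM 1 Γ.one_mem)
  have h1 : ∀ j, ‖b.repr x j‖ ≤ ‖e‖ * ‖x‖ := fun j =>
    (norm_le_pi_norm (e x) j).trans (e.le_opNorm x)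
  have h2 : φ x = ∑ j, b.repr x j * φ (b j) := by
    conv_lhs => rw [← b.sum_repr x]
    simp only [map_sum, map_smul, smul_eq_mul]
  have h3 : ‖φ x‖ ≤ ∑ j : Fin r, ‖e‖ * ‖x‖ * M := by
    rw [h2]
    refine (norm_sum_le _ _).trans (Finset.sum_le_sum fun j _ => ?_)
    rw [norm_mul]
    exact mul_le_mul (h1 j) (hM _ (hb j)) (norm_nonneg _) (by positivity)
  refine h3.trans ?_
  rw [Finset.sum_const, Finset.card_univ, Fintype.card_fin, nsmul_eq_mul]
  have h4 : (r * ‖e‖) * ‖x‖ ≤ 1 / 2 := by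
    have h5 : (r * ‖e‖ + 1) * ‖x‖ ≤ 1 / 2 := by
      calc (r * ‖e‖ + 1) * ‖x‖ ≤ (r * ‖e‖ + 1) * (1 / (2 * (r * ‖e‖ + 1))) := by gcongr
        _ = 1 / 2 := by field_simp
    nlinarith [norm_nonneg x]
  nlinarith

/-- If the factors of a product have small trace pairings, then the product is small: the part of
each factor in the radical of the trace form is nilpotent. -/
lemma exists_norm_seqProd_le (Γ : Submonoid R) (hspan : Submodule.span ℂ (Γ : Set R) = ⊤)
    (tr : R →ₗ[ℂ] ℂ) (htr : ∀ x y, tr (x * y) = tr (y * x))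
    (hnil : ∀ x, (∀ y, tr (x * y) = 0) → IsNilpotent x) (D : ℝ) (hD : 0 ≤ D) :
    ∃ (C : ℝ) (L : ℕ), 0 ≤ C ∧ ∀ (f : ℕ → R) (δ b : ℝ), 1 ≤ b → 0 ≤ δ → δ ≤ D →
      (∀ j < L + 1, ‖f j‖ ≤ b) → (∀ j < L + 1, ∀ y ∈ Γ, ‖tr (f j * y)‖ ≤ δ) →
      ‖seqProd f (L + 1)‖ ≤ C * δ * b ^ L := by
  obtain ⟨L, hL⟩ := exists_seqProd_eq_zero tr htr hnil
  obtain ⟨r, Y, hY⟩ := exists_finite_spanning (Γ : Set R) hspan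
  let Φ : R →ₗ[ℂ] (Fin r → ℂ) := LinearMap.pi fun j => tr ∘ₗ LinearMap.mulRight ℂ (Y j)
  have hΦ : ∀ x j, Φ x j = tr (x * Y j) := fun x j => by simp [Φ]
  obtain ⟨g, hg⟩ := Φ.rangeRestrict.exists_rightInverse_of_surjective Φ.range_rangeRestrict
  obtain ⟨s', hs'⟩ := g.exists_extend
  have hs : ∀ x, Φ (s' (Φ x)) = Φ x := by
    intro x
    have h1 : s' (Φ x) = g (Φ.rangeRestrict x) := by rw [← hs']; rfl
    rw [h1]
    exact congrArg Subtype.val (LinearMap.congr_fun hg (Φ.rangeRestrict x))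
  set s := LinearMap.toContinuousLinearMap s' with hsdef
  have hker : ∀ x, ∀ y, tr ((x - s (Φ x)) * y) = 0 := by
    intro x y
    have h0 : Φ (x - s (Φ x)) = 0 := by rw [map_sub]; exact sub_eq_zero.2 (hs x).symm
    rw [← Y.sum_repr y, Finset.mul_sum, map_sum]
    refine Finset.sum_eq_zero fun j _ => ?_
    rw [mul_smul_comm, map_smul, ← hΦ, h0]
    simp
  set q := 1 + ‖s‖ * D with hq
  have hq1 : 1 ≤ q := by have : 0 ≤ ‖s‖ * D := by positivity
                         linarith
  refine ⟨‖(1 : R)‖ * (((L + 1 : ℕ) : ℝ) * ‖s‖ * q ^ L), L, by positivity,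
    fun f δ b hb hδ hδD hf hfΓ => ?_⟩
  have hsmall : ∀ j < L + 1, ‖s (Φ (f j))‖ ≤ ‖s‖ * δ := fun j hj =>
    (s.le_opNorm _).trans (mul_le_mul_of_nonneg_left
      ((pi_norm_le_iff_of_nonneg hδ).2 fun k => by
        rw [hΦ]; exact hfΓ j hj _ (hY k)) (norm_nonneg _))
  have hbq : b ≤ q * b := le_mul_of_one_le_left (by linarith) hq1
  have hmain := norm_seqProd_sub_le (f := f) (g := fun j => f j - s (Φ (f j))) (b := q * b)
    (η := ‖s‖ * δ) (L + 1) (fun j hj => (hf j hj).trans hbq)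
    (fun j hj => by
      refine (norm_sub_le _ _).trans ((add_le_add (hf j hj) (hsmall j hj)).trans ?_)
      have : ‖s‖ * δ ≤ ‖s‖ * D := by gcongr
      have h2 : ‖s‖ * D ≤ ‖s‖ * D * b := le_mul_of_one_le_right (by positivity) hb
      rw [hq]; linarith)
    (fun j hj => by simpa using hsmall j hj) ‖(1 : R)‖ (hb.trans hbq) le_rfl
  have hzero : seqProd (fun j => f j - s (Φ (f j))) (L + 1) = 0 := by
    rw [seqProd_succ, hL _ (fun j y => hker (f j) y), zero_mul]
  rw [hzero, sub_zero] at hmain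
  have hpos : 0 < q * b := by linarith
  refine le_of_mul_le_mul_left (hmain.trans (le_of_eq ?_)) hpos
  rw [pow_succ, mul_pow]; ring

end Span

section HitProd

variable {R : Type*} [Ring R]

/-- `HitProd Γ B k x`: `x` is a product of elements of `Γ` and of `k` factors equal to `B`. -/
inductive HitProd (Γ : Submonoid R) (B : R) : ℕ → R → Prop
  | base {x : R} (hx : x ∈ Γ) : HitProd Γ B 0 x
  | step {k : ℕ} {u v : R} (hu : HitProd Γ B k u) (hv : v ∈ Γ) : HitProd Γ B (k + 1) (u * B * v)

lemma HitProd.mul_mem {Γ : Submonoid R} {B : R} {k : ℕ} {x v : R} (hx : HitProd Γ B k x)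
    (hv : v ∈ Γ) : HitProd Γ B k (x * v) := by
  cases hx with
  | base h => exact .base (Γ.mul_mem h hv)
  | step hu hw => rw [mul_assoc]; exact .step hu (Γ.mul_mem hw hv)

lemma HitProd.norm_apply_le [Algebra ℂ R] {Γ : Submonoid R} {B : R} {tr : R →ₗ[ℂ] ℂ} {D : ℝ}
    (hB : ∀ (φ : R →ₗ[ℂ] ℂ) (M : ℝ), (∀ y ∈ Γ, ‖φ y‖ ≤ M) → ‖φ B‖ ≤ M / 2)
    (hD : ∀ x ∈ Γ, ‖tr x‖ ≤ D) {k : ℕ} {x : R} (hx : HitProd Γ B k x) :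
    ‖tr x‖ ≤ D / 2 ^ k := by
  induction k generalizing x with
  | zero => cases hx with
    | base h => simpa using hD x h
  | succ k ih => cases hx with
    | @step _ u v hu hv =>
      have := hB (tr ∘ₗ LinearMap.mulLeft ℂ u ∘ₗ LinearMap.mulRight ℂ v) (D / 2 ^ k)
        (fun y hy => by simpa using ih (hu.mul_mem (Γ.mul_mem hy hv)))
      rw [pow_succ, ← div_div]
      simpa [mul_assoc] using this

end HitProd

section MeanErgodic

/-- The mean ergodic theorem, without naming the limit. -/
lemma exists_tendsto_birkhoffAverage {E : Type*} [NormedAddCommGroup E] [InnerProductSpace ℝ E]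
    [CompleteSpace E] (V : E →L[ℝ] E) (hV : ‖V‖ ≤ 1) (x : E) :
    ∃ y, V y = y ∧ Tendsto (birkhoffAverage ℝ V _root_.id · x) atTop (𝓝 y) :=
  ⟨_, ((V.eqLocus (1 : E →L[ℝ] E)).orthogonalProjectionOnto x).2,
    V.tendsto_birkhoffAverage_orthogonalProjection hV x⟩

variable {α : Type*} [MeasurableSpace α] {μ : Measure α} [IsProbabilityMeasure μ] {f : α → α}

/-- Mean ergodic theorem, in measure, for the visits to a set. -/
lemma tendstoInMeasure_birkhoffAverage_indicator (hf : Ergodic f μ) {U : Set α}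
    (hU : MeasurableSet U) :
    TendstoInMeasure μ (fun n => birkhoffAverage ℝ f (U.indicator fun _ => (1 : ℝ)) n) atTop
      (fun _ => μ.real U) := by
  have hmp := hf.toMeasurePreserving
  obtain ⟨V, hVn, hV⟩ : ∃ V : Lp ℝ 2 μ →L[ℝ] Lp ℝ 2 μ, ‖V‖ ≤ 1 ∧
      ⇑V = Lp.compMeasurePreserving f hmp :=
    ⟨(Lp.compMeasurePreservingₗᵢ ℝ f hmp).toContinuousLinearMap,
      LinearIsometry.norm_toContinuousLinearMap_le _, rfl⟩
  set x : Lp ℝ 2 μ := indicatorConstLp 2 hU (measure_ne_top μ U) (1 : ℝ) with hx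
  have hmk : ∀ k, MeasurableSet (f^[k] ⁻¹' U) := fun k => (hmp.measurable.iterate k) hU
  have hVk : ∀ k, V^[k] x = indicatorConstLp 2 (hmk k) (measure_ne_top μ _) (1 : ℝ) := by
    intro k
    rw [hV, Lp.compMeasurePreserving_iterate, hx, Lp.indicatorConstLp_compMeasurePreserving]
  obtain ⟨y, hVy, hy⟩ := exists_tendsto_birkhoffAverage V hVn x
  have hae : ∀ n, (birkhoffAverage ℝ V _root_.id n x : Lp ℝ 2 μ) =ᵐ[μ]
      birkhoffAverage ℝ f (U.indicator fun _ => (1 : ℝ)) n := by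
    intro n
    have hsum : ((∑ k ∈ Finset.range n, V^[k] x : Lp ℝ 2 μ) : α → ℝ) =ᵐ[μ]
        birkhoffSum f (U.indicator fun _ => (1 : ℝ)) n := by
      induction n with
      | zero => simpa [birkhoffSum_zero'] using Lp.coeFn_zero ℝ 2 μ
      | succ n ih =>
        rw [Finset.sum_range_succ]
        have h2 : (V^[n] x : Lp ℝ 2 μ) =ᵐ[μ] (f^[n] ⁻¹' U).indicator fun _ => (1 : ℝ) := by
          rw [hVk]; exact indicatorConstLp_coeFn
        filter_upwards [Lp.coeFn_add (∑ k ∈ Finset.range n, V^[k] x) (V^[n] x), ih, h2]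
          with a h3 h4 h5
        rw [h3, Pi.add_apply, h4, h5, birkhoffSum_succ]
        rfl
    simp only [birkhoffAverage, birkhoffSum, _root_.id]
    filter_upwards [Lp.coeFn_smul ((n : ℝ)⁻¹) (∑ k ∈ Finset.range n, V^[k] x), hsum] with a h1 h2
    rw [h1, Pi.smul_apply, h2]
    rfl
  obtain ⟨c, hc⟩ : ∃ c, (y : α → ℝ) =ᵐ[μ] Function.const α c := by
    refine hf.ae_eq_const_of_ae_eq_comp_ae (Lp.aestronglyMeasurable y) ?_
    have h1 := Lp.coeFn_compMeasurePreserving y hmp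
    have h2 : Lp.compMeasurePreserving f hmp y = y := by rw [← hV, hVy]
    rw [h2] at h1
    exact h1.symm
  set e : Lp ℝ 2 μ := indicatorConstLp 2 MeasurableSet.univ (measure_ne_top μ _) (1 : ℝ) with he
  have hlim : Tendsto (fun n => inner ℝ e (birkhoffAverage ℝ V _root_.id n x)) atTop
      (𝓝 (inner ℝ e y)) := (tendsto_const_nhds).inner hy
  have hiy : inner ℝ e y = c := by
    rw [he, L2.inner_indicatorConstLp_one, setIntegral_univ, integral_congr_ae hc]
    simp
  have hin : ∀ᶠ n : ℕ in atTop, inner ℝ e (birkhoffAverage ℝ V _root_.id n x) = μ.real U := by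
    filter_upwards [eventually_gt_atTop 0] with n hn
    have hn' : (n : ℝ) ≠ 0 := by positivity
    simp only [birkhoffAverage, birkhoffSum, _root_.id, inner_smul_right, inner_sum, hVk]
    simp only [he, L2.real_inner_indicatorConstLp_one_indicatorConstLp_one, Set.univ_inter]
    have h3 : ∀ k, μ.real (f^[k] ⁻¹' U) = μ.real U := fun k => by
      rw [measureReal_def, (hmp.iterate k).measure_preimage hU.nullMeasurableSet,
        measureReal_def]
    simp [h3, hn']
  have hcU : c = μ.real U := by
    rw [← hiy]
    exact tendsto_nhds_unique hlim (tendsto_const_nhds.congr' (hin.mono fun n hn => hn.symm))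
  have hT := tendstoInMeasure_of_tendsto_Lp hy
  exact (hT.congr hae (hcU ▸ hc))

/-- Along an ergodic system, a set is visited with at least half of its expected frequency,
outside a set of small measure. -/
lemma tendsto_measure_birkhoffSum_indicator_le (hf : Ergodic f μ) {U : Set α}
    (hU : MeasurableSet U) (hpos : 0 < μ U) :
    Tendsto (fun n : ℕ => μ {i | birkhoffSum f (U.indicator fun _ => (1 : ℝ)) n i
      ≤ n * (μ.real U / 2)}) atTop (𝓝 0) := by
  have hp : 0 < μ.real U := ENNReal.toReal_pos hpos.ne' (measure_ne_top _ _)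
  have h := tendstoInMeasure_iff_dist.1 (tendstoInMeasure_birkhoffAverage_indicator hf hU)
    (μ.real U / 2) (by positivity)
  refine tendsto_of_tendsto_of_tendsto_of_le_of_le' tendsto_const_nhds h
    (Eventually.of_forall fun _ => zero_le) ?_
  filter_upwards [eventually_gt_atTop 0] with n hn
  refine measure_mono fun i hi => ?_
  have hn' : (0 : ℝ) < n := by positivity
  simp only [Set.mem_ofPred_eq] at hi ⊢
  have h1 : birkhoffAverage ℝ f (U.indicator fun _ => (1 : ℝ)) n i ≤ μ.real U / 2 := by
    rw [birkhoffAverage, smul_eq_mul, inv_mul_le_iff₀ hn']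
    exact hi
  rw [Real.dist_eq, abs_sub_comm]
  exact le_trans (by linarith) (le_abs_self _)

end MeanErgodic

section Shift

variable {K : ℕ}

lemma shift_iterate_apply (i : ℕ → Fin K) (m k : ℕ) : ((shift K)^[m] i) k = i (m + k) := by
  induction m generalizing i with
  | zero => simp
  | succ m ih =>
    rw [Function.iterate_succ_apply, ih]
    simp only [shift]
    congr 1; ring

/-- The cylinder of sequences which agree with `ξ` up to time `m`. -/
def cyl (ξ : ℕ → Fin K) (m : ℕ) : Set (ℕ → Fin K) := {x | ∀ r < m, x r = ξ r}

lemma isOpen_cyl (ξ : ℕ → Fin K) (m : ℕ) : IsOpen (cyl ξ m) := by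
  have : cyl ξ m = ⋂ r ∈ Finset.range m, (fun x : ℕ → Fin K => x r) ⁻¹' {ξ r} := by
    ext x; simp [cyl]
  rw [this]
  exact isOpen_biInter_finset fun r _ => (isOpen_discrete _).preimage (continuous_apply r)

variable {R : Type*} [Monoid R]

lemma seqProd_shift_add (T : Fin K → R) (i : ℕ → Fin K) (m n : ℕ) :
    seqProd (fun k => T (i k)) (m + n) =
      seqProd (fun k => T (i k)) m * seqProd (fun k => T ((shift K)^[m] i k)) n := by
  rw [seqProd_add]; simp only [shift_iterate_apply]

lemma seqProd_shift_mul (T : Fin K → R) (i : ℕ → Fin K) (L n : ℕ) :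
    seqProd (fun k => T (i k)) (L * n) =
      seqProd (fun j => seqProd (fun k => T ((shift K)^[j * n] i k)) n) L := by
  rw [seqProd_mul]; simp only [shift_iterate_apply]

lemma birkhoffSum_indicator_le_add {α : Type*} (f : α → α) (U : Set α) {a b : ℕ}
    (h : b ≤ a) (i : α) :
    birkhoffSum f (U.indicator fun _ => (1 : ℝ)) a i ≤
      birkhoffSum f (U.indicator fun _ => (1 : ℝ)) b i + ((a : ℝ) - b) := by
  obtain ⟨c, rfl⟩ := Nat.exists_eq_add_of_le h
  rw [birkhoffSum_add]
  have : birkhoffSum f (U.indicator fun _ => (1 : ℝ)) c (f^[b] i) ≤ c := by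
    rw [birkhoffSum]
    refine (Finset.sum_le_card_nsmul _ _ 1 fun k _ => ?_).trans (by simp)
    exact Set.indicator_le_self' (fun _ _ => zero_le_one) _
  push_cast
  linarith

end Shift

section Hits

variable {K : ℕ} {R : Type*} [Ring R]

/-- A long product contains many disjoint occurrences of a word, in terms of the number of visits
to the corresponding cylinder. -/
lemma exists_hitProd (Γ : Submonoid R) (T : Fin K → R) (hT : ∀ k, T k ∈ Γ) (ξ : ℕ → Fin K)
    (m : ℕ) (i : ℕ → Fin K) (s : ℕ) :
    ∃ j : ℕ, HitProd Γ (seqProd (fun k => T (ξ k)) m) j (seqProd (fun k => T (i k)) s) ∧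
      birkhoffSum (shift K) ((cyl ξ m).indicator fun _ => (1 : ℝ)) (s - m) i ≤ (m + 1) * j := by
  induction s using Nat.strong_induction_on with
  | _ s ih =>
    by_cases hs : s ≤ m
    · refine ⟨0, .base (seqProd_mem Γ (fun k => hT _) s), ?_⟩
      simp [Nat.sub_eq_zero_of_le hs, birkhoffSum_zero']
    obtain ⟨t, rfl⟩ : ∃ t, s = t + m + 1 := ⟨s - m - 1, by omega⟩
    have e : t + m + 1 - m = t + 1 := by omega
    rw [e]
    by_cases hU : (shift K)^[t] i ∈ cyl ξ m
    · obtain ⟨j, hj, hle⟩ := ih t (by omega)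
      refine ⟨j + 1, ?_, ?_⟩
      · have h1 : seqProd (fun k => T ((shift K)^[t] i k)) m = seqProd (fun k => T (ξ k)) m :=
          seqProd_congr fun k hk => by rw [hU k hk]
        rw [seqProd_succ, seqProd_shift_add, h1]
        exact .step hj (hT _)
      · have h1 := birkhoffSum_indicator_le_add (shift K) (cyl ξ m)
          (show t - m ≤ t + 1 by omega) i
        have h2 : ((t + 1 : ℕ) : ℝ) - (t - m : ℕ) ≤ m + 1 := by
          have : (t : ℝ) - m ≤ (t - m : ℕ) := by
            rw [sub_le_iff_le_add]; exact_mod_cast (by omega : t ≤ t - m + m)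
          push_cast; linarith
        push_cast
        linarith
    · obtain ⟨j, hj, hle⟩ := ih (t + m) (by omega)
      refine ⟨j, ?_, ?_⟩
      · rw [seqProd_succ]; exact hj.mul_mem (hT _)
      · rw [birkhoffSum_succ, Set.indicator_of_notMem hU, add_zero]
        simpa using hle

end Hits

section Growth

variable {K : ℕ} {R : Type*} [NormedRing R]

lemma exists_norm_seqProd_le_of_finite (T : Fin K → R) (n : ℕ) :
    ∃ B : ℝ, ∀ i : ℕ → Fin K, ‖seqProd (fun k => T (i k)) n‖ ≤ B := by
  induction n with
  | zero => exact ⟨‖(1 : R)‖, fun i => le_rfl⟩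
  | succ n ih =>
    obtain ⟨B, hB⟩ := ih
    refine ⟨B * ∑ k, ‖T k‖, fun i => ?_⟩
    rw [seqProd_succ]
    refine (norm_mul_le _ _).trans (mul_le_mul (hB i) ?_ (norm_nonneg _)
      ((norm_nonneg _).trans (hB i)))
    exact Finset.single_le_sum (f := fun k => ‖T k‖) (fun k _ => norm_nonneg _)
      (Finset.mem_univ (i n))

open Real in
/-- Subexponential growth, from an estimate which saves one factor out of `L + 1`. -/
lemma eventually_norm_seqProd_le_exp (T : Fin K → R) (C : ℝ) (L : ℕ)
    (h : ∀ (n : ℕ) (i : ℕ → Fin K) (b : ℝ), 1 ≤ b →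
      (∀ x : ℕ → Fin K, ‖seqProd (fun k => T (x k)) n‖ ≤ b) →
      ‖seqProd (fun k => T (i k)) ((L + 1) * n)‖ ≤ C * b ^ L) {ε : ℝ} (hε : 0 < ε) :
    ∀ᶠ n : ℕ in atTop, ∀ i : ℕ → Fin K, ‖seqProd (fun k => T (i k)) n‖ ≤ exp (ε * n) := by
  set u : ℕ → ℝ := fun n => ⨆ i : ℕ → Fin K, log⁺ ‖seqProd (fun k => T (i k)) n‖ with hu
  have hbdd : ∀ n, BddAbove (Set.range fun i : ℕ → Fin K =>
      log⁺ ‖seqProd (fun k => T (i k)) n‖) := by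
    intro n
    obtain ⟨B, hB⟩ := exists_norm_seqProd_le_of_finite T n
    exact ⟨log⁺ B, by rintro _ ⟨i, rfl⟩; exact posLog_le_posLog (norm_nonneg _) (hB i)⟩
  have hle : ∀ (n : ℕ) (i : ℕ → Fin K), log⁺ ‖seqProd (fun k => T (i k)) n‖ ≤ u n := fun n i =>
    le_ciSup (hbdd n) i
  have hu0 : ∀ n, 0 ≤ u n := fun n => Real.iSup_nonneg fun i => posLog_nonneg
  have hexp : ∀ (n : ℕ) (i : ℕ → Fin K), ‖seqProd (fun k => T (i k)) n‖ ≤ exp (u n) := fun n i =>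
    (le_exp_log _).trans (exp_le_exp.2 ((le_max_right _ _).trans (hle n i)))
  have hsub : Subadditive u := by
    intro m n
    refine Real.iSup_le (fun i => ?_) (add_nonneg (hu0 m) (hu0 n))
    rw [seqProd_shift_add]
    refine (posLog_le_posLog (norm_nonneg _) (norm_mul_le _ _)).trans ?_
    exact posLog_mul.trans (add_le_add (hle m i) (hle n _))
  have hbelow : BddBelow (Set.range fun n => u n / n) :=
    ⟨0, by rintro _ ⟨n, rfl⟩; exact div_nonneg (hu0 n) n.cast_nonneg⟩
  have hlim := hsub.tendsto_lim hbelow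
  have hrec : ∀ n, u ((L + 1) * n) ≤ log⁺ C + L * u n := by
    intro n
    refine Real.iSup_le (fun i => ?_)
      (add_nonneg posLog_nonneg (mul_nonneg L.cast_nonneg (hu0 n)))
    refine (posLog_le_posLog (norm_nonneg _)
      (h n i (exp (u n)) (one_le_exp (hu0 n)) (hexp n))).trans (posLog_mul.trans ?_)
    rw [posLog_pow, posLog_eq_log (x := exp (u n))
        (by rw [abs_of_pos (exp_pos _)]; exact one_le_exp (hu0 n)),
      log_exp]
  have hlim0 : hsub.lim ≤ 0 := by
    have h1 : Tendsto (fun n : ℕ => ((L : ℝ) + 1) * (u ((L + 1) * n) / ((L + 1) * n : ℕ))) atTop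
        (𝓝 ((L + 1) * hsub.lim)) :=
      (hlim.comp (tendsto_id.const_mul_atTop' (Nat.succ_pos L))).const_mul _
    have h2 : Tendsto (fun n : ℕ => log⁺ C / n + L * (u n / n)) atTop
        (𝓝 (0 + L * hsub.lim)) :=
      (tendsto_const_div_atTop_nhds_zero_nat _).add (hlim.const_mul _)
    have h3 := le_of_tendsto_of_tendsto h1 h2 (by
      filter_upwards [eventually_gt_atTop 0] with n hn
      have hn' : (0 : ℝ) < n := by positivity
      have e : ((L : ℝ) + 1) * (u ((L + 1) * n) / ((L + 1) * n : ℕ)) = u ((L + 1) * n) / n := by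
        push_cast; field_simp
      rw [e, ← mul_div_assoc, ← add_div]
      exact div_le_div_of_nonneg_right (hrec n) hn'.le)
    linarith
  filter_upwards [hlim.eventually (gt_mem_nhds (hlim0.trans_lt hε)), eventually_gt_atTop 0]
    with n hn hn0 i
  refine (hexp n i).trans (exp_le_exp.2 ?_)
  have hn' : (0 : ℝ) < n := by positivity
  exact ((div_lt_iff₀ hn').1 hn).le

end Growth

section Contradiction

variable {K : ℕ} {R : Type*} [NormedRing R]

lemma continuous_seqProd (T : Fin K → R) (n : ℕ) :
    Continuous fun i : ℕ → Fin K => seqProd (fun k => T (i k)) n := by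
  induction n with
  | zero => simpa using continuous_const
  | succ n ih =>
    simp only [seqProd_succ]
    exact ih.mul (continuous_of_discreteTopology.comp (continuous_apply n))

lemma measurable_birkhoffSum_indicator {α : Type*} [MeasurableSpace α] {f : α → α}
    (hf : Measurable f) {U : Set α} (hU : MeasurableSet U) (n : ℕ) :
    Measurable (birkhoffSum f (U.indicator fun _ => (1 : ℝ)) n) := by
  have : birkhoffSum f (U.indicator fun _ => (1 : ℝ)) n =
      fun i => ∑ k ∈ Finset.range n, U.indicator (fun _ => (1 : ℝ)) (f^[k] i) := rfl
  rw [this]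
  exact Finset.measurable_sum _ fun k _ =>
    (measurable_const.indicator hU).comp (hf.iterate k)

open Real in
lemma tendsto_measure_norm_seqProd_lt_exp (T : Fin K → R) (μ : Measure (ℕ → Fin K))
    [IsProbabilityMeasure μ]
    (hext : ∀ᵐ i ∂μ, Tendsto (fun n : ℕ => ‖seqProd (fun k => T (i k)) n‖ ^ ((n : ℝ)⁻¹)) atTop
      (𝓝 1)) {ε : ℝ} (hε : 0 < ε) :
    Tendsto (fun n : ℕ => μ {i | ‖seqProd (fun k => T (i k)) n‖ < exp (-(ε * n))}) atTop
      (𝓝 0) := by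
  have hexp : exp (-ε) < 1 := by rw [exp_lt_one_iff]; linarith
  have hm := tendstoInMeasure_of_tendsto_ae (fun n : ℕ =>
    ((continuous_seqProd T n).norm.measurable.pow_const ((n : ℝ)⁻¹)).aestronglyMeasurable) hext
  have h := tendstoInMeasure_iff_dist.1 hm (1 - exp (-ε)) (by linarith)
  refine tendsto_of_tendsto_of_tendsto_of_le_of_le' tendsto_const_nhds h
    (Eventually.of_forall fun _ => zero_le) ?_
  filter_upwards [eventually_gt_atTop 0] with n hn
  refine measure_mono fun i hi => ?_
  simp only [Set.mem_ofPred_eq] at hi ⊢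
  have hn' : (0 : ℝ) < n := by positivity
  have h1 : ‖seqProd (fun k => T (i k)) n‖ ^ ((n : ℝ)⁻¹) ≤ exp (-ε) := by
    refine (rpow_le_rpow (norm_nonneg _) hi.le (by positivity)).trans_eq ?_
    rw [← exp_mul]
    congr 1
    field_simp
  rw [dist_comm, Real.dist_eq]
  exact le_trans (by linarith) (le_abs_self _)

variable [NormedAlgebra ℂ R]

/-- Products with many visits to a contracting word have exponentially small traces. -/
lemma norm_apply_seqProd_mul_le {T : Fin K → R} {Γ : Submonoid R} (hT : ∀ k, T k ∈ Γ)
    {tr : R →ₗ[ℂ] ℂ} {D : ℝ} (hD : ∀ x ∈ Γ, ‖tr x‖ ≤ D) {ξ : ℕ → Fin K} {m : ℕ}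
    (hB : ∀ (φ : R →ₗ[ℂ] ℂ) (M : ℝ), (∀ y ∈ Γ, ‖φ y‖ ≤ M) →
      ‖φ (seqProd (fun k => T (ξ k)) m)‖ ≤ M / 2) {a : ℝ} {n : ℕ} {i : ℕ → Fin K}
    (hi : n * a < birkhoffSum (shift K) ((cyl ξ m).indicator fun _ => (1 : ℝ)) n i)
    {y : R} (hy : y ∈ Γ) :
    ‖tr (seqProd (fun k => T (i k)) n * y)‖ ≤
      2 * D * Real.exp (-(Real.log 2 * a / (m + 1) * n)) := by
  have hD0 : 0 ≤ D := (norm_nonneg _).trans (hD 1 Γ.one_mem)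
  obtain ⟨j, hj, hle⟩ := exists_hitProd Γ T hT ξ m i n
  have h1 := birkhoffSum_indicator_le_add (shift K) (cyl ξ m) (Nat.sub_le n m) i
  have h2 : (n : ℝ) - (n - m : ℕ) ≤ m := by
    have : (n : ℝ) ≤ (n - m : ℕ) + m := by exact_mod_cast (by omega : n ≤ n - m + m)
    linarith
  have h3 : a / (m + 1) * n ≤ j + 1 := by
    rw [div_mul_eq_mul_div, div_le_iff₀ (by positivity)]
    nlinarith
  refine ((hj.mul_mem hy).norm_apply_le hB hD).trans ?_
  have hl := Real.log_pos one_lt_two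
  have h4 : Real.log 2 * a / (m + 1) * n ≤ Real.log 2 * (j + 1) := by
    rw [mul_div_assoc, mul_assoc]
    gcongr
  have h5 : (2 : ℝ) ^ (j + 1) = Real.exp (Real.log 2 * (j + 1)) := by
    rw [← Real.rpow_natCast, Real.rpow_def_of_pos two_pos]; push_cast; rfl
  calc D / 2 ^ j = 2 * D * Real.exp (-(Real.log 2 * (j + 1))) := by
        rw [Real.exp_neg, ← h5, pow_succ]; field_simp
    _ ≤ _ := by gcongr

variable [FiniteDimensional ℂ R]

open Real in
/-- If the traces along a semigroup are bounded and the associated trace form detects nilpotency,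
then a periodic density point of an ergodic measure with zero growth rate does not contract. -/
theorem not_tendsto_pow_of_densityPoint (T : Fin K → R)
    (hspan : Submodule.span ℂ (Submonoid.closure (Set.range T) : Set R) = ⊤)
    (tr : R →ₗ[ℂ] ℂ) (htr : ∀ x y, tr (x * y) = tr (y * x))
    (hnil : ∀ x, (∀ y, tr (x * y) = 0) → IsNilpotent x) {D : ℝ}
    (hD : ∀ x ∈ Submonoid.closure (Set.range T), ‖tr x‖ ≤ D)
    (μ : Measure (ℕ → Fin K)) [IsProbabilityMeasure μ] (hμ : Ergodic (shift K) μ)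
    (hext : ∀ᵐ i ∂μ, Tendsto (fun n : ℕ => ‖seqProd (fun k => T (i k)) n‖ ^ ((n : ℝ)⁻¹)) atTop
      (𝓝 1))
    {ξ : ℕ → Fin K} {p : ℕ} (hper : ∀ n, ξ (n + p) = ξ n) (hξ : DensityPoint μ ξ) :
    ¬ Tendsto (fun k => seqProd (fun k => T (ξ k)) p ^ k) atTop (𝓝 0) := by
  intro hlim
  set Γ := Submonoid.closure (Set.range T) with hΓ
  have hT : ∀ k, T k ∈ Γ := fun k => Submonoid.subset_closure ⟨k, rfl⟩
  have hD0 : 0 ≤ D := (norm_nonneg _).trans (hD 1 Γ.one_mem)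
  obtain ⟨δ, hδ, hhalf⟩ := exists_forall_norm_apply_le_half Γ hspan
  obtain ⟨k, hk⟩ := (((tendsto_zero_iff_norm_tendsto_zero.1 hlim).eventually
    (gt_mem_nhds hδ)).exists)
  set m := k * p with hm
  have hB := hhalf (seqProd (fun k => T (ξ k)) m) (by
    rw [hm, seqProd_mul_of_periodic (fun n => by rw [hper])]; exact hk.le)
  have hU : MeasurableSet (cyl ξ m) := (isOpen_cyl ξ m).measurableSet
  have hpos : 0 < μ (cyl ξ m) := hξ _ (isOpen_cyl ξ m) fun _ _ => rfl
  have hpr : 0 < μ.real (cyl ξ m) := ENNReal.toReal_pos hpos.ne' (measure_ne_top _ _)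
  set a := μ.real (cyl ξ m) / 2 with ha
  set κ := Real.log 2 * a / (m + 1) with hκ
  have hκ0 : 0 < κ := by have := Real.log_pos one_lt_two; positivity
  obtain ⟨C, L, hC, hCL⟩ := exists_norm_seqProd_le Γ hspan tr htr hnil D hD0
  set ε := κ / (2 * (2 * L + 1)) with hε
  have hε0 : 0 < ε := by positivity
  have hgrow := eventually_norm_seqProd_le_exp T (C * D) L (fun n i b hb hn => by
    rw [seqProd_shift_mul]
    refine hCL _ D b hb hD0 le_rfl (fun j _ => hn _) fun j _ y hy => hD _ (Γ.mul_mem ?_ hy)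
    exact seqProd_mem Γ (fun k => hT _) n) hε0
  set bad : ℕ → Set (ℕ → Fin K) := fun n => {i | birkhoffSum (shift K)
    ((cyl ξ m).indicator fun _ => (1 : ℝ)) n i ≤ n * a} with hbad
  have hbadm : ∀ n, MeasurableSet (bad n) := fun n =>
    measurableSet_le (measurable_birkhoffSum_indicator hμ.measurable hU n) measurable_const
  have hbad0 : Tendsto (fun n => μ (bad n)) atTop (𝓝 0) :=
    tendsto_measure_birkhoffSum_indicator_le hμ hU hpos
  have hlow := (tendsto_measure_norm_seqProd_lt_exp T μ hext hε0).comp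
    (tendsto_id.const_mul_atTop' (Nat.succ_pos L))
  have hsum : Tendsto (fun n => ∑ j ∈ Finset.range (L + 1), μ ((shift K)^[j * n] ⁻¹' bad n) +
      μ {i | ‖seqProd (fun k => T (i k)) ((L + 1) * n)‖ < exp (-(ε * ((L + 1) * n : ℕ)))})
      atTop (𝓝 0) := by
    have h0 : ∀ n j, μ ((shift K)^[j * n] ⁻¹' bad n) = μ (bad n) := fun n j =>
      (hμ.toMeasurePreserving.iterate _).measure_preimage (hbadm n).nullMeasurableSet
    simp only [h0, Finset.sum_const, Finset.card_range, nsmul_eq_mul]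
    simpa using (ENNReal.Tendsto.const_mul hbad0 (Or.inr (by simp))).add hlow
  have hnat : Tendsto (fun n : ℕ => (n : ℝ)) atTop atTop := tendsto_natCast_atTop_atTop
  have hδD : ∀ᶠ n : ℕ in atTop, 2 * D * exp (-(κ * n)) ≤ D := by
    filter_upwards [(hnat.const_mul_atTop hκ0).eventually_ge_atTop (Real.log 2)] with n hn
    have : exp (-(κ * n)) ≤ 2⁻¹ := by
      rw [exp_neg]
      exact inv_anti₀ two_pos ((Real.log_le_iff_le_exp two_pos).1 hn)
    nlinarith
  have hbig := ((tendsto_exp_atTop.comp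
    (hnat.const_mul_atTop (half_pos hκ0))).eventually_gt_atTop (2 * C * D))
  obtain ⟨n, hn1, hn2, hn3, hn4⟩ :=
    (hgrow.and (hδD.and (hbig.and (hsum.eventually (gt_mem_nhds one_pos))))).exists
  obtain ⟨i, hi1, hi2⟩ : ∃ i, (∀ j < L + 1, (shift K)^[j * n] i ∉ bad n) ∧
      exp (-(ε * ((L + 1) * n : ℕ))) ≤ ‖seqProd (fun k => T (i k)) ((L + 1) * n)‖ := by
    by_contra! hcon
    refine hn4.not_ge ?_
    rw [← measure_univ (μ := μ)]
    refine (measure_mono fun i _ => ?_).trans ((measure_union_le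
      (⋃ j ∈ Finset.range (L + 1), (shift K)^[j * n] ⁻¹' bad n) _).trans
      (add_le_add_left (measure_biUnion_finset_le _ _) _))
    by_cases h : ∀ j < L + 1, (shift K)^[j * n] i ∉ bad n
    · exact Or.inr (hcon i h)
    · push Not at h
      obtain ⟨j, hj, hjb⟩ := h
      exact Or.inl (Set.mem_biUnion (Finset.mem_coe.2 (Finset.mem_range.2 hj)) hjb)
  have hup : ‖seqProd (fun k => T (i k)) ((L + 1) * n)‖ ≤
      C * (2 * D * exp (-(κ * n))) * exp (ε * n) ^ L := by
    rw [seqProd_shift_mul]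
    refine hCL _ _ _ (one_le_exp (by positivity)) (by positivity) hn2 (fun j _ => hn1 _)
      fun j hj y hy => ?_
    exact norm_apply_seqProd_mul_le hT hD hB (not_le.1 (hi1 j hj)) hy
  refine hn3.not_ge ?_
  have h := hi2.trans hup
  have e : exp (κ / 2 * n) = exp (-(ε * ((L + 1) * n : ℕ))) *
      (exp (κ * n) * exp (-(L * (ε * n)))) := by
    rw [← exp_add, ← exp_add]
    congr 1
    have : κ = ε * (2 * (2 * L + 1)) := by rw [hε]; field_simp
    rw [this]; push_cast; ring
  simp only [Function.comp_apply]
  rw [e]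
  refine (mul_le_mul_of_nonneg_right h (by positivity)).trans_eq ?_
  rw [← exp_nat_mul, exp_neg, exp_neg]
  field_simp

end Contradiction

section MatrixFacts

variable {d : ℕ}

open Polynomial in
lemma isNilpotent_of_forall_trace_aeval_mul_eq_zero {A : Matrix (Fin d) (Fin d) ℂ}
    (h : ∀ q : ℂ[X], (A * aeval A q).trace = 0) : IsNilpotent A := by
  obtain ⟨g, hg, hgX⟩ := exists_eq_pow_rootMultiplicity_mul_and_not_dvd A.charpoly
    A.charpoly_monic.ne_zero 0
  set a := rootMultiplicity 0 A.charpoly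
  rw [C_0, sub_zero] at hg hgX
  obtain ⟨u, v, huv⟩ := (irreducible_X.coprime_iff_not_dvd.2 hgX).pow_left (m := a + 1)
  have hCH : A ^ (a + 1) * aeval A g = 0 := by
    have := A.aeval_self_charpoly
    rw [hg, map_mul, map_pow, aeval_X] at this
    rw [pow_succ', mul_assoc, this, mul_zero]
  have h1 : aeval A u * A ^ (a + 1) + aeval A v * aeval A g = 1 := by
    have := congrArg (aeval A) huv
    simpa using this
  set e := aeval A u * A ^ (a + 1) with he
  have hee : e * (aeval A v * aeval A g) = 0 := by
    rw [he, ← map_mul, mul_assoc, mul_comm v g, map_mul, ← mul_assoc (A ^ (a + 1)), hCH,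
      zero_mul, mul_zero]
  have hid : IsIdempotentElem e := by
    have : e * 1 = e * e := by rw [← h1, mul_add, hee, add_zero]
    rw [IsIdempotentElem, ← this, mul_one]
  have htr : e.trace = 0 := by
    rw [← h (u * X ^ a), he, show A * aeval A (u * X ^ a) = aeval A (X * (u * X ^ a)) by simp,
      show X * (u * X ^ a) = u * X ^ (a + 1) by ring]
    simp
  have he0 : e = 0 := by
    have hL : IsIdempotentElem (Matrix.toLin' e) := by
      rw [IsIdempotentElem, Module.End.mul_eq_comp, ← Matrix.toLin'_mul, hid.eq]
    have := LinearMap.IsIdempotentElem.eq_zero_of_trace_eq_zero hL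
      (by rw [Matrix.trace_toLin'_eq, htr])
    simpa using this
  refine ⟨a + 1, ?_⟩
  rw [he0, zero_add, ← map_mul, mul_comm v g, map_mul] at h1
  rw [← mul_one (A ^ (a + 1)), ← h1, ← mul_assoc, hCH, zero_mul]

lemma norm_trace_le {A : Matrix (Fin d) (Fin d) ℂ} {r : ℝ} (h : ∀ z ∈ spectrum ℂ A, ‖z‖ ≤ r) :
    ‖A.trace‖ ≤ d * r := by
  rcases Nat.eq_zero_or_pos d with rfl | hd
  · simp [Matrix.trace]
  have : Nonempty (Fin d) := ⟨⟨0, hd⟩⟩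
  obtain ⟨z, hz⟩ := spectrum.nonempty_of_isAlgClosed_of_finiteDimensional ℂ A
  have hr : 0 ≤ r := (norm_nonneg z).trans (h z hz)
  rw [Matrix.trace_eq_sum_roots_charpoly]
  refine (norm_multiset_sum_le _).trans ((Multiset.sum_le_card_nsmul _ r ?_).trans ?_)
  · intro x hx
    obtain ⟨z, hz, rfl⟩ := Multiset.mem_map.1 hx
    exact h z (Matrix.mem_spectrum_of_isRoot_charpoly (Polynomial.isRoot_of_mem_roots hz))
  · rw [Multiset.card_map, nsmul_eq_mul]
    have : A.charpoly.roots.card ≤ d :=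
      (Polynomial.card_roots' _).trans_eq (by simp)
    gcongr

end MatrixFacts

namespace MatrixNorm

variable {d : ℕ} (ν : MatrixNorm d)

/-- The ring norm attached to a matrix norm. -/
def ringNorm : RingNorm (Matrix (Fin d) (Fin d) ℂ) where
  toFun := ν.N
  map_zero' := (ν.definite 0).2 rfl
  add_le' := ν.triangle
  neg' A := by simpa using ν.homog (-1) A
  mul_le' := ν.submult
  eq_zero_of_map_eq_zero' A h := (ν.definite A).1 h

/-- Matrices as a normed ring, for a given matrix norm. -/
abbrev normedRing : NormedRing (Matrix (Fin d) (Fin d) ℂ) := ν.ringNorm.toNormedRing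

/-- Matrices as a normed algebra, for a given matrix norm. -/
abbrev normedAlgebra : @NormedAlgebra ℂ (Matrix (Fin d) (Fin d) ℂ) _
    ν.normedRing.toSeminormedRing :=
  letI := ν.normedRing
  { (inferInstance : Algebra ℂ (Matrix (Fin d) (Fin d) ℂ)) with
    norm_smul_le := fun c A => (ν.homog c A).le }

lemma specRad_nonneg (A : Matrix (Fin d) (Fin d) ℂ) : 0 ≤ specRad A := ENNReal.toReal_nonneg

lemma spectralRadius_ne_top (ν : MatrixNorm d) (A : Matrix (Fin d) (Fin d) ℂ) :
    spectralRadius ℂ A ≠ ∞ := by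
  let _ := ν.normedRing
  let _ := ν.normedAlgebra
  have : CompleteSpace (Matrix (Fin d) (Fin d) ℂ) := FiniteDimensional.complete ℂ _
  refine ne_top_of_le_ne_top ?_ (spectrum.spectralRadius_le_pow_nnnorm_pow_one_div ℂ A 0)
  finiteness

/-- Gelfand's formula. -/
lemma tendsto_specRad (A : Matrix (Fin d) (Fin d) ℂ) :
    Tendsto (fun n : ℕ => ν.N (A ^ n) ^ ((n : ℝ)⁻¹)) atTop (𝓝 (specRad A)) := by
  let _ := ν.normedRing
  let _ := ν.normedAlgebra
  have : CompleteSpace (Matrix (Fin d) (Fin d) ℂ) := FiniteDimensional.complete ℂ _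
  have h := (ENNReal.tendsto_toReal (ν.spectralRadius_ne_top A)).comp
    (spectrum.pow_norm_pow_one_div_tendsto_nhds_spectralRadius A)
  refine h.congr fun n => ?_
  rw [Function.comp_apply, ENNReal.toReal_ofReal (Real.rpow_nonneg (norm_nonneg _) _), one_div]
  rfl

lemma N_pow_le (A : Matrix (Fin d) (Fin d) ℂ) {n : ℕ} (hn : 1 ≤ n) : ν.N (A ^ n) ≤ ν.N A ^ n := by
  let _ := ν.normedRing
  exact norm_pow_le' A hn

lemma specRad_le (A : Matrix (Fin d) (Fin d) ℂ) : specRad A ≤ ν.N A := by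
  refine le_of_tendsto (ν.tendsto_specRad A) ?_
  filter_upwards [eventually_ge_atTop 1] with n hn
  refine (Real.rpow_le_rpow (ν.nonneg _) (ν.N_pow_le A hn) (by positivity)).trans_eq ?_
  exact Real.pow_rpow_inv_natCast (ν.nonneg A) (by omega)

lemma specRad_pow (ν : MatrixNorm d) (A : Matrix (Fin d) (Fin d) ℂ) {k : ℕ} (hk : 1 ≤ k) :
    specRad (A ^ k) = specRad A ^ k := by
  refine tendsto_nhds_unique (ν.tendsto_specRad (A ^ k)) ?_
  refine (((ν.tendsto_specRad A).comp (tendsto_id.const_mul_atTop' hk)).pow k).congr fun n => ?_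
  have hk' : (k : ℝ) ≠ 0 := by positivity
  simp only [Function.comp_apply, _root_.id]
  rw [← Real.rpow_natCast, ← Real.rpow_mul (ν.nonneg _), pow_mul]
  congr 1
  push_cast
  rw [mul_inv, mul_comm, ← mul_assoc, mul_inv_cancel₀ hk', one_mul]

lemma specRad_smul (ν : MatrixNorm d) (c : ℂ) (A : Matrix (Fin d) (Fin d) ℂ) :
    specRad (c • A) = ‖c‖ * specRad A := by
  refine tendsto_nhds_unique (ν.tendsto_specRad (c • A)) ?_
  refine ((ν.tendsto_specRad A).const_mul ‖c‖).congr' ?_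
  filter_upwards [eventually_ge_atTop 1] with n hn
  rw [smul_pow, ν.homog, Real.mul_rpow (norm_nonneg _) (ν.nonneg _), norm_pow,
    Real.pow_rpow_inv_natCast (norm_nonneg _) (by omega)]

lemma tendsto_N_pow_zero {A : Matrix (Fin d) (Fin d) ℂ} (h : specRad A < 1) :
    Tendsto (fun k => ν.N (A ^ k)) atTop (𝓝 0) := by
  obtain ⟨s, hs, hs1⟩ := exists_between h
  have hs0 : 0 ≤ s := (specRad_nonneg A).trans hs.le
  refine squeeze_zero' (Eventually.of_forall fun k => ν.nonneg _) ?_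
    (tendsto_pow_atTop_nhds_zero_of_lt_one hs0 hs1)
  filter_upwards [(ν.tendsto_specRad A).eventually (gt_mem_nhds hs), eventually_ge_atTop 1]
    with k hk hk1
  have := pow_le_pow_left₀ (Real.rpow_nonneg (ν.nonneg _) _) hk.le k
  rwa [Real.rpow_inv_natCast_pow (ν.nonneg _) (by omega)] at this

lemma norm_le_specRad (ν : MatrixNorm d) {A : Matrix (Fin d) (Fin d) ℂ} {z : ℂ}
    (hz : z ∈ spectrum ℂ A) :
    ‖z‖ ≤ specRad A := by
  have h : (‖z‖₊ : ℝ≥0∞) ≤ spectralRadius ℂ A :=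
    le_iSup₂ (f := fun k (_ : k ∈ spectrum ℂ A) => (‖k‖₊ : ℝ≥0∞)) z hz
  simpa [specRad] using ENNReal.toReal_mono (ν.spectralRadius_ne_top A) h

end MatrixNorm

section Words

variable {d K : ℕ}

lemma seqProd_eq_prod_ofFn {R : Type*} [Monoid R] (a : ℕ → R) (n : ℕ) :
    seqProd a n = (List.ofFn fun t : Fin n => a t).prod := by
  induction n with
  | zero => simp
  | succ n ih =>
    rw [List.ofFn_succ', List.concat_eq_append, List.prod_append, seqProd_succ, ih]
    simp

lemma wordProd_eq_seqProd (S : Fin K → Matrix (Fin d) (Fin d) ℂ) (i : ℕ → Fin K) (n : ℕ) :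
    wordProd S i n = seqProd (fun k => S (i k)) n :=
  (seqProd_eq_prod_ofFn (fun k => S (i k)) n).symm

lemma finWordProd_eq_seqProd (S : Fin K → Matrix (Fin d) (Fin d) ℂ) (i : ℕ → Fin K) (n : ℕ) :
    finWordProd S (fun t : Fin n => i t) = seqProd (fun k => S (i k)) n :=
  (seqProd_eq_prod_ofFn (fun k => S (i k)) n).symm

/-- Every finite word is the beginning of a periodic sequence. -/
lemma exists_periodic_extension {n : ℕ} (hn : 1 ≤ n) (w : Fin n → Fin K) :
    ∃ x : ℕ → Fin K, (∀ k, x (k + n) = x k) ∧ w = fun t : Fin n => x t := by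
  refine ⟨fun k => w ⟨k % n, Nat.mod_lt _ hn⟩, fun k => by simp, ?_⟩
  funext t
  exact congrArg w (Fin.ext (Nat.mod_eq_of_lt t.2).symm)

namespace MatrixNorm

variable (ν : MatrixNorm d)

lemma exists_N_seqProd_le (S : Fin K → Matrix (Fin d) (Fin d) ℂ) (n : ℕ) :
    ∃ B : ℝ, ∀ i : ℕ → Fin K, ν.N (seqProd (fun k => S (i k)) n) ≤ B := by
  let _ := ν.normedRing
  exact exists_norm_seqProd_le_of_finite S n

lemma exists_forall_N_seqProd_le_pow (S : Fin K → Matrix (Fin d) (Fin d) ℂ) :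
    ∃ M : ℝ, 1 ≤ M ∧ ∀ n, 1 ≤ n → ∀ i : ℕ → Fin K,
      ν.N (seqProd (fun k => S (i k)) n) ≤ M ^ n := by
  have h0 : 0 ≤ ∑ k, ν.N (S k) := Finset.sum_nonneg fun k _ => ν.nonneg _
  have hS : ∀ k, ν.N (S k) ≤ 1 + ∑ k, ν.N (S k) := fun k =>
    (Finset.single_le_sum (f := fun k => ν.N (S k)) (fun k _ => ν.nonneg _)
      (Finset.mem_univ k)).trans (by linarith)
  refine ⟨1 + ∑ k, ν.N (S k), by linarith, fun n hn i => ?_⟩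
  induction n, hn using Nat.le_induction with
  | base => simpa [seqProd_succ] using hS (i 0)
  | succ n hn ih =>
    rw [seqProd_succ, pow_succ]
    exact (ν.submult _ _).trans (mul_le_mul ih (hS _) (ν.nonneg _) (by positivity))

lemma specRad_rpow_le_genSpecRad (ν : MatrixNorm d) (S : Fin K → Matrix (Fin d) (Fin d) ℂ)
    {n : ℕ} (hn : 1 ≤ n)
    (i : ℕ → Fin K) :
    specRad (seqProd (fun k => S (i k)) n) ^ ((n : ℝ)⁻¹) ≤ genSpecRad S := by
  obtain ⟨x, hx, hxi⟩ := exists_periodic_extension hn (fun t : Fin n => i t)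
  have hP : seqProd (fun k => S (i k)) n = seqProd (fun k => S (x k)) n :=
    seqProd_congr fun k hk => by rw [show i k = x k from congrFun hxi ⟨k, hk⟩]
  rw [hP]
  obtain ⟨M, hM, hMS⟩ := ν.exists_forall_N_seqProd_le_pow S
  have hne : Nonempty (Fin K) := ⟨i 0⟩
  have hbound : ∀ n, 1 ≤ n → ∀ w : Fin n → Fin K,
      specRad (finWordProd S w) ^ ((n : ℝ)⁻¹) ≤ M := by
    intro n hn w
    obtain ⟨y, -, rfl⟩ := exists_periodic_extension hn w
    rw [finWordProd_eq_seqProd]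
    refine (Real.rpow_le_rpow (specRad_nonneg _)
      ((ν.specRad_le _).trans (hMS n hn y)) (by positivity)).trans_eq ?_
    exact Real.pow_rpow_inv_natCast (by linarith) (by omega)
  refine le_limsup_of_frequently_le (frequently_atTop.2 fun a =>
    ⟨(a + 1) * n, by nlinarith, ?_⟩) (isBoundedUnder_of_eventually_le (a := M) ?_)
  · have h := hbound ((a + 1) * n) (Nat.mul_pos a.succ_pos hn)
    refine le_trans (le_of_eq ?_) (le_ciSup (f := fun w : Fin ((a + 1) * n) → Fin K =>
      specRad (finWordProd S w) ^ ((((a + 1) * n : ℕ) : ℝ)⁻¹))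
      ⟨M, by rintro _ ⟨w, rfl⟩; exact h w⟩ fun t => x t)
    rw [finWordProd_eq_seqProd, seqProd_mul_of_periodic (fun k => by rw [hx]),
      ν.specRad_pow _ a.succ_pos, ← Real.rpow_natCast, ← Real.rpow_mul (specRad_nonneg _)]
    congr 1
    push_cast
    have hn' : (n : ℝ) ≠ 0 := by positivity
    field_simp
  · filter_upwards [eventually_ge_atTop 1] with n hn
    exact ciSup_le (hbound n hn)

lemma specRad_seqProd_le (ν : MatrixNorm d) (S : Fin K → Matrix (Fin d) (Fin d) ℂ)
    {n : ℕ} (hn : 1 ≤ n)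
    (i : ℕ → Fin K) : specRad (seqProd (fun k => S (i k)) n) ≤ genSpecRad S ^ n := by
  have h := pow_le_pow_left₀ (Real.rpow_nonneg (specRad_nonneg _) _)
    (ν.specRad_rpow_le_genSpecRad S hn i) n
  rwa [Real.rpow_inv_natCast_pow (specRad_nonneg _) (by omega)] at h

lemma genSpecRad_nonneg (ν : MatrixNorm d) (hK : 0 < K) (S : Fin K → Matrix (Fin d) (Fin d) ℂ) :
    0 ≤ genSpecRad S :=
  (Real.rpow_nonneg (specRad_nonneg _) _).trans
    (ν.specRad_rpow_le_genSpecRad S le_rfl fun _ => ⟨0, hK⟩)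

end MatrixNorm
end Words

section Sufficiency

variable {d K : ℕ} (ν : MatrixNorm d)

lemma exists_eq_seqProd_of_mem_closure {R : Type*} [Monoid R] (hK : 0 < K) (T : Fin K → R) {x : R}
    (hx : x ∈ Submonoid.closure (Set.range T)) :
    ∃ (n : ℕ) (i : ℕ → Fin K), x = seqProd (fun k => T (i k)) n := by
  induction hx using Submonoid.closure_induction_right with
  | one => exact ⟨0, fun _ => ⟨0, hK⟩, rfl⟩
  | mul_right x _ y hy ih =>
    obtain ⟨n, i, rfl⟩ := ih
    obtain ⟨k, rfl⟩ := hy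
    refine ⟨n + 1, Function.update i n k, ?_⟩
    rw [seqProd_succ, Function.update_self,
      seqProd_congr (b := fun m => T (Function.update i n k m)) fun m hm => ?_]
    rw [Function.update_of_ne hm.ne]

/-- The contraction statement for matrices of generalized spectral radius at most one. -/
lemma one_le_specRad_of_densityPoint (ν : MatrixNorm d) (hK : 0 < K)
    (T : Fin K → Matrix (Fin d) (Fin d) ℂ)
    (hT : ∀ n, 1 ≤ n → ∀ i : ℕ → Fin K, specRad (seqProd (fun k => T (i k)) n) ≤ 1)
    (μ : Measure (ℕ → Fin K)) [IsProbabilityMeasure μ] (hμ : Ergodic (shift K) μ)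
    (hext : ∀ᵐ i ∂μ, Tendsto (fun n : ℕ => ν.N (seqProd (fun k => T (i k)) n) ^ ((n : ℝ)⁻¹))
      atTop (𝓝 1))
    {ξ : ℕ → Fin K} {p : ℕ} (hper : ∀ n, ξ (n + p) = ξ n) (hξ : DensityPoint μ ξ) :
    1 ≤ specRad (seqProd (fun k => T (ξ k)) p) := by
  by_contra! hlt
  let _ := ν.normedRing
  let _ := ν.normedAlgebra
  let 𝒜 : Subalgebra ℂ (Matrix (Fin d) (Fin d) ℂ) := Algebra.adjoin ℂ (Set.range T)
  let T' : Fin K → 𝒜 := fun k => ⟨T k, Algebra.subset_adjoin ⟨k, rfl⟩⟩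
  have hval : ∀ (i : ℕ → Fin K) n, ((seqProd (fun k => T' (i k)) n : 𝒜) :
      Matrix (Fin d) (Fin d) ℂ) = seqProd (fun k => T (i k)) n := fun i n =>
    map_seqProd 𝒜.val.toMonoidHom _ _
  have hspan : Submodule.span ℂ (Submonoid.closure (Set.range T') : Set 𝒜) = ⊤ := by
    rw [← Algebra.adjoin_eq_span, ← Algebra.top_toSubmodule,
      ← Algebra.adjoin_adjoin_coe_preimage (R := ℂ) (s := Set.range T)]
    congr 2
    ext x
    simp [T', Subtype.ext_iff]
  let tr : 𝒜 →ₗ[ℂ] ℂ := Matrix.traceLinearMap (Fin d) ℂ ℂ ∘ₗ 𝒜.val.toLinearMap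
  have htr : ∀ x, tr x = (x : Matrix (Fin d) (Fin d) ℂ).trace := fun x => rfl
  refine not_tendsto_pow_of_densityPoint T' hspan tr (fun x y => ?_) (fun x hx => ?_) (D := d * 1)
    (fun x hx => ?_) μ hμ (hext.mono fun i hi => ?_) hper hξ ?_
  · exact Matrix.trace_mul_comm (x : Matrix (Fin d) (Fin d) ℂ) y
  · have h := isNilpotent_of_forall_trace_aeval_mul_eq_zero (A := (x : Matrix (Fin d) (Fin d) ℂ))
      fun q => by
        rw [← 𝒜.val_apply x, Polynomial.aeval_algHom_apply, ← map_mul]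
        exact hx _
    exact (IsNilpotent.map_iff (f := 𝒜.val) Subtype.val_injective).1 h
  · obtain ⟨n, i, rfl⟩ := exists_eq_seqProd_of_mem_closure hK T' hx
    rw [htr, hval]
    refine norm_trace_le fun z hz => (ν.norm_le_specRad hz).trans ?_
    rcases Nat.eq_zero_or_pos n with rfl | hn
    · have h := ν.specRad_pow (1 : Matrix (Fin d) (Fin d) ℂ) one_le_two
      rw [one_pow] at h
      rw [seqProd_zero]
      nlinarith
    · exact hT n hn i
  · refine hi.congr fun n => ?_
    rw [← hval]
    rfl
  · rw [tendsto_zero_iff_norm_tendsto_zero]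
    refine (ν.tendsto_N_pow_zero hlt).congr fun k => ?_
    rw [← hval, ← Subalgebra.coe_pow]
    rfl

theorem hasFinitenessProperty_of_densityPoint (hK : 0 < K)
    (S : Fin K → Matrix (Fin d) (Fin d) ℂ)
    (μ : Measure (ℕ → Fin K)) [IsProbabilityMeasure μ] (hμ : Ergodic (shift K) μ)
    (hext : IsExtremal S ν.N μ) {ξ : ℕ → Fin K} {p : ℕ} (hper : IsPeriodic ξ p)
    (hξ : DensityPoint μ ξ) : HasFinitenessProperty S := by
  refine ⟨p, hper.1, fun t => ξ t, ?_⟩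
  rw [finWordProd_eq_seqProd]
  refine le_antisymm ?_ (ν.specRad_rpow_le_genSpecRad S hper.1 ξ)
  have hp : p ≠ 0 := by have := hper.1; omega
  rcases (ν.genSpecRad_nonneg hK S).eq_or_lt with h0 | h0
  · rw [← h0]
    exact Real.rpow_nonneg (MatrixNorm.specRad_nonneg _) _
  set ρ := genSpecRad S with hρ
  have hc : ‖(ρ : ℂ)⁻¹‖ = ρ⁻¹ := by rw [norm_inv, Complex.norm_real, Real.norm_of_nonneg h0.le]
  have hsr : ∀ n (i : ℕ → Fin K), specRad (seqProd (fun k => ((ρ : ℂ)⁻¹) • S (i k)) n) =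
      (ρ ^ n)⁻¹ * specRad (seqProd (fun k => S (i k)) n) := fun n i => by
    rw [seqProd_smul, ν.specRad_smul, norm_pow, hc, inv_pow]
  have h := one_le_specRad_of_densityPoint ν hK (fun k => ((ρ : ℂ)⁻¹) • S k)
    (fun n hn i => by
      rw [hsr, inv_mul_le_one₀ (by positivity)]
      exact ν.specRad_seqProd_le S hn i) μ hμ (hext.mono fun i hi => ?_) hper.2 hξ
  · rw [hsr, one_le_inv_mul₀ (by positivity)] at h
    rw [← Real.pow_rpow_inv_natCast h0.le hp]
    exact Real.rpow_le_rpow (by positivity) h (by positivity)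
  · have h1 := hi.const_mul ρ⁻¹
    rw [← hρ, inv_mul_cancel₀ h0.ne'] at h1
    refine h1.congr' ?_
    filter_upwards [eventually_ne_atTop 0] with n hn
    rw [seqProd_smul, ν.homog, norm_pow, hc, Real.mul_rpow (by positivity) (ν.nonneg _),
      Real.pow_rpow_inv_natCast (by positivity) hn, wordProd_eq_seqProd]

end Sufficiency

section Necessity

variable {d K : ℕ}

lemma specRad_mul_comm (A B : Matrix (Fin d) (Fin d) ℂ) : specRad (A * B) = specRad (B * A) := by
  have h : spectrum ℂ (A * B) = spectrum ℂ (B * A) := by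
    ext z
    rw [Matrix.mem_spectrum_iff_isRoot_charpoly, Matrix.mem_spectrum_iff_isRoot_charpoly,
      Matrix.charpoly_mul_comm]
  rw [specRad, specRad, spectralRadius, spectralRadius, h]

lemma specRad_seqProd_shift_iterate (S : Fin K → Matrix (Fin d) (Fin d) ℂ) {x : ℕ → Fin K} {p : ℕ}
    (hx : ∀ n, x (n + p) = x n) (t : ℕ) :
    specRad (seqProd (fun k => S ((shift K)^[t] x k)) p) = specRad (seqProd (fun k => S (x k)) p) := by
  induction t with
  | zero => rfl
  | succ t ih =>
    rw [← ih, Function.iterate_succ_apply']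
    set y := (shift K)^[t] x with hy
    have hyp : y p = y 0 := by
      rw [hy, shift_iterate_apply, shift_iterate_apply, hx, add_zero]
    cases p with
    | zero => rfl
    | succ l =>
      rw [seqProd_succ, specRad_mul_comm, add_comm l 1, seqProd_shift_add S y, seqProd_succ,
        seqProd_zero, one_mul, ← hyp]
      rfl

lemma tendsto_const_mul_pow_rpow_inv {c t : ℝ} (hc : 0 < c) (ht : 0 ≤ t) :
    Tendsto (fun m : ℕ => (c * t ^ m) ^ ((m : ℝ)⁻¹)) atTop (𝓝 t) := by
  have h := ((Real.continuousAt_const_rpow hc.ne').tendsto.comp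
    (tendsto_inv_atTop_nhds_zero_nat (𝕜 := ℝ))).mul_const t
  rw [Real.rpow_zero, one_mul] at h
  refine h.congr' ?_
  filter_upwards [eventually_ne_atTop 0] with m hm
  rw [Real.mul_rpow hc.le (by positivity), Real.pow_rpow_inv_natCast ht hm]
  rfl

lemma MatrixNorm.tendsto_N_seqProd_of_periodic (ν : MatrixNorm d)
    (S : Fin K → Matrix (Fin d) (Fin d) ℂ) {x : ℕ → Fin K} {p : ℕ} (hp : 1 ≤ p)
    (hx : ∀ n, x (n + p) = x n) :
    Tendsto (fun n : ℕ => ν.N (seqProd (fun k => S (x k)) n) ^ ((n : ℝ)⁻¹)) atTop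
      (𝓝 (specRad (seqProd (fun k => S (x k)) p) ^ ((p : ℝ)⁻¹))) := by
  set Q := seqProd (fun k => S (x k)) p with hQ
  set r := specRad Q ^ ((p : ℝ)⁻¹) with hr
  have hr0 : 0 ≤ r := Real.rpow_nonneg (specRad_nonneg _) _
  have hrp : r ^ p = specRad Q := Real.rpow_inv_natCast_pow (specRad_nonneg _) (by omega)
  have hpow : ∀ q, seqProd (fun k => S (x k)) (q * p) = Q ^ q := fun q =>
    seqProd_mul_of_periodic (fun n => by rw [hx]) q
  choose B hB using ν.exists_N_seqProd_le S
  set C := 1 + ∑ j ∈ Finset.range (p + 1), |B j| with hCdef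
  have hC : ∀ j ≤ p, ∀ i : ℕ → Fin K, ν.N (seqProd (fun k => S (i k)) j) ≤ C := by
    intro j hj i
    have := Finset.single_le_sum (f := fun j => |B j|) (fun j _ => abs_nonneg _)
      (Finset.mem_range.2 (Nat.lt_succ_of_le hj))
    exact (hB j i).trans ((le_abs_self _).trans (by linarith))
  have hC0 : 0 < C := by
    have : 0 ≤ ∑ j ∈ Finset.range (p + 1), |B j| := Finset.sum_nonneg fun j _ => abs_nonneg _
    linarith
  have hminpow : ∀ t : ℝ, 0 < t → ∀ j ≤ p, min 1 t ^ p ≤ t ^ j := fun t ht j hj =>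
    (pow_le_pow_of_le_one (by positivity) (min_le_left _ _) hj).trans
      (pow_le_pow_left₀ (by positivity) (min_le_right _ _) j)
  refine tendsto_order.2 ⟨fun a ha => ?_, fun s hs => ?_⟩
  · rcases lt_or_ge a 0 with h | h
    · exact Eventually.of_forall fun n => h.trans_le (Real.rpow_nonneg (ν.nonneg _) _)
    have hrpos : 0 < r := h.trans_lt ha
    have hc : 0 < min 1 r ^ p / C := by positivity
    filter_upwards [(tendsto_const_mul_pow_rpow_inv hc hr0).eventually (lt_mem_nhds ha)] with m hm
    refine hm.trans_le (Real.rpow_le_rpow (by positivity) ?_ (by positivity))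
    obtain ⟨j, hj, hmj⟩ : ∃ j ≤ p, (m / p + 1) * p = m + j :=
      ⟨p - m % p, Nat.sub_le _ _, by
        have := Nat.div_add_mod' m p
        have := Nat.mod_lt m hp
        rw [add_mul]; omega⟩
    have h1 : r ^ m * r ^ j ≤ ν.N (seqProd (fun k => S (x k)) m) * C := by
      rw [← pow_add, ← hmj, mul_comm, pow_mul, hrp, ← ν.specRad_pow _ (Nat.succ_pos _)]
      refine (ν.specRad_le _).trans ?_
      rw [← hpow, hmj, seqProd_shift_add]
      exact (ν.submult _ _).trans (mul_le_mul_of_nonneg_left (hC j hj _) (ν.nonneg _))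
    rw [div_mul_eq_mul_div, div_le_iff₀ hC0]
    refine le_trans ?_ h1
    rw [mul_comm]
    exact mul_le_mul_of_nonneg_left (hminpow r hrpos j hj) (by positivity)
  · obtain ⟨s', hs1, hs2⟩ := exists_between hs
    have hs0 : 0 < s' := hr0.trans_lt hs1
    have hc : 0 < C / min 1 s' ^ p := by positivity
    have hQs : specRad Q < s' ^ p := by
      rw [← hrp]; exact pow_lt_pow_left₀ hs1 hr0 (by omega)
    have hq := (Nat.tendsto_div_const_atTop (show p ≠ 0 by omega)).eventually
      (((ν.tendsto_specRad Q).eventually (gt_mem_nhds hQs)).and (eventually_ne_atTop 0))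
    filter_upwards [(tendsto_const_mul_pow_rpow_inv hc hs0.le).eventually (gt_mem_nhds hs2), hq]
      with m hm hqm
    refine lt_of_le_of_lt (Real.rpow_le_rpow (ν.nonneg _) ?_ (by positivity)) hm
    have hmj : m / p * p + m % p = m := Nat.div_add_mod' m p
    have hj : m % p ≤ p := (Nat.mod_lt m hp).le
    have h1 : ν.N (Q ^ (m / p)) ≤ s' ^ (m / p * p) := by
      have := pow_le_pow_left₀ (Real.rpow_nonneg (ν.nonneg _) _) hqm.1.le (m / p)
      rwa [Real.rpow_inv_natCast_pow (ν.nonneg _) hqm.2, ← pow_mul, mul_comm p] at this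
    have h2 : ν.N (seqProd (fun k => S (x k)) m) ≤ s' ^ (m / p * p) * C := by
      conv_lhs => rw [← hmj]
      rw [seqProd_shift_add, hpow]
      exact (ν.submult _ _).trans (mul_le_mul h1 (hC _ hj _) (ν.nonneg _) (by positivity))
    rw [div_mul_eq_mul_div, le_div_iff₀ (by positivity)]
    calc _ ≤ s' ^ (m / p * p) * C * s' ^ (m % p) :=
          mul_le_mul h2 (hminpow s' hs0 _ hj) (by positivity) (by positivity)
      _ = C * s' ^ m := by
          conv_rhs => rw [← hmj, pow_add]
          ring

/-- The uniform measure on the first `n` points of the orbit of `ξ`. -/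
def orbitMeasure (ξ : ℕ → Fin K) (n : ℕ) : Measure (ℕ → Fin K) :=
  (n : ℝ≥0∞)⁻¹ • ∑ t ∈ Finset.range n, Measure.dirac ((shift K)^[t] ξ)

lemma ae_orbitMeasure {ξ : ℕ → Fin K} {n : ℕ} {q : (ℕ → Fin K) → Prop}
    (h : ∀ t, q ((shift K)^[t] ξ)) : ∀ᵐ i ∂(orbitMeasure ξ n), q i := by
  refine Measure.ae_smul_measure ?_ _
  rw [ae_finsetSum_measure_iff]
  intro t _
  rw [ae_dirac_eq]
  exact h t

lemma isProbabilityMeasure_orbitMeasure (ξ : ℕ → Fin K) {n : ℕ} (hn : 1 ≤ n) :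
    IsProbabilityMeasure (orbitMeasure ξ n) := by
  refine ⟨?_⟩
  have : (n : ℝ≥0∞) ≠ 0 := by exact_mod_cast (by omega : n ≠ 0)
  simp [orbitMeasure, ENNReal.inv_mul_cancel this (ENNReal.natCast_ne_top n)]

lemma ergodic_orbitMeasure {ξ : ℕ → Fin K} {n : ℕ} (hξ : (shift K)^[n] ξ = ξ) :
    Ergodic (shift K) (orbitMeasure ξ n) where
  measurable := measurable_pi_lambda _ fun k => measurable_pi_apply (k + 1)
  map_eq := by
    have hm : Measurable (shift K) := measurable_pi_lambda _ fun k => measurable_pi_apply (k + 1)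
    rw [orbitMeasure, Measure.map_smul, Measure.map_finset_sum hm.aemeasurable]
    simp only [Measure.map_dirac' hm, ← Function.iterate_succ_apply' (shift K)]
    congr 1
    cases n with
    | zero => simp
    | succ m => rw [Finset.sum_range_succ, hξ, Finset.sum_range_succ', Function.iterate_zero_apply]
  aeconst_set s _ hinv := by
    have hiff : ∀ t, (shift K)^[t] ξ ∈ s ↔ ξ ∈ s := fun t => by
      induction t with
      | zero => rw [Function.iterate_zero_apply]
      | succ t ih =>
        rw [← ih, Function.iterate_succ_apply', ← Set.mem_preimage, hinv]
    rw [eventuallyConst_set]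
    by_cases h : ξ ∈ s
    · exact Or.inl (ae_orbitMeasure fun t => (hiff t).2 h)
    · exact Or.inr (ae_orbitMeasure fun t => (hiff t).not.2 h)

lemma densityPoint_orbitMeasure (ξ : ℕ → Fin K) {n : ℕ} (hn : 1 ≤ n) :
    DensityPoint (orbitMeasure ξ n) ξ := by
  intro U hU hξ
  rw [orbitMeasure, Measure.smul_apply, smul_eq_mul]
  refine ENNReal.mul_pos (by simp) ?_
  rw [Measure.finsetSum_apply]
  refine ne_of_gt (lt_of_lt_of_le ?_ (Finset.single_le_sum
    (f := fun t => Measure.dirac ((shift K)^[t] ξ) U) (fun _ _ => zero_le)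
    (Finset.mem_range.2 hn)))
  simp [hU.measurableSet, hξ]

theorem HasFinitenessProperty.exists_measure {S : Fin K → Matrix (Fin d) (Fin d) ℂ}
    (h : HasFinitenessProperty S) (ν : MatrixNorm d) :
    ∃ μ : Measure (ℕ → Fin K), IsProbabilityMeasure μ ∧ Ergodic (shift K) μ ∧
      IsExtremal S ν.N μ ∧
      ∃ ξ : ℕ → Fin K, (∃ π : ℕ, IsPeriodic ξ π) ∧ DensityPoint μ ξ := by
  obtain ⟨n, hn, w, hw⟩ := h
  obtain ⟨ξ, hξ, rfl⟩ := exists_periodic_extension hn w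
  rw [finWordProd_eq_seqProd] at hw
  refine ⟨orbitMeasure ξ n, isProbabilityMeasure_orbitMeasure ξ hn, ergodic_orbitMeasure ?_,
    ae_orbitMeasure fun t => ?_, ξ, ⟨n, hn, hξ⟩, densityPoint_orbitMeasure ξ hn⟩
  · funext k
    rw [shift_iterate_apply, add_comm, hξ]
  · rw [hw, ← specRad_seqProd_shift_iterate S hξ t]
    simp only [wordProd_eq_seqProd]
    refine ν.tendsto_N_seqProd_of_periodic S hn fun k => ?_
    rw [shift_iterate_apply, shift_iterate_apply, ← add_assoc, hξ]

end Necessity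

/-- **Main Theorem.** `S` has the spectral finiteness property if and only if some
extremal ergodic probability measure for `S` has a periodic density point. -/
theorem finiteness_iff_extremal_measure_with_periodic_density_point
    {d K : ℕ} (hd : 2 ≤ d) (hK : 2 ≤ K)
    (S : Fin K → Matrix (Fin d) (Fin d) ℂ) (ν : MatrixNorm d) :
    HasFinitenessProperty S ↔
      ∃ μ : Measure (ℕ → Fin K), IsProbabilityMeasure μ ∧ Ergodic (shift K) μ ∧
        IsExtremal S ν.N μ ∧
        ∃ ξ : ℕ → Fin K, (∃ π : ℕ, IsPeriodic ξ π) ∧ DensityPoint μ ξ := by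
  constructor
  · exact fun h => h.exists_measure ν
  · rintro ⟨μ, hμ, herg, hext, ξ, ⟨p, hp⟩, hξ⟩
    exact hasFinitenessProperty_of_densityPoint ν (by omega) S μ herg hext hp hξ
end
end

section
/- Let S = {S_1,…,S_K} be an arbitrary finite set of complex d×d matrices. Then there exists at least one θ-ergodic Borel probability measure μ_* on Σ_K^+ which is extremal for S, i.e., such that ρ(S) = lim_{n→∞} ‖S_{i_1}⋯S_{i_n}‖^{1/n} for μ_*-a.e. i ∈ Σ_K^+. -/
open Filter MeasureTheory Topology
open scoped ENNReal

noncomputable section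

open scoped BoundedContinuousFunction in
theorem exists_measurePreserving_probabilityMeasure {Y : Type*} [TopologicalSpace Y]
    [CompactSpace Y] [T2Space Y] [MeasurableSpace Y] [BorelSpace Y] [HasOuterApproxClosed Y]
    [Nonempty Y] {f : Y → Y} (hf : Continuous f) :
    ∃ μ : ProbabilityMeasure Y, MeasurePreserving f (μ : Measure Y) μ := by
  obtain ⟨x⟩ := ‹Nonempty Y›
  let m : ℕ → Measure Y := fun n =>
    ((n : ℝ≥0∞) + 1)⁻¹ • ∑ k ∈ Finset.range (n + 1), Measure.dirac (f^[k] x)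
  have hm : ∀ n, IsProbabilityMeasure (m n) := fun n => ⟨by
    simp only [m, Measure.smul_apply, Measure.finsetSum_apply, measure_univ, smul_eq_mul,
      Finset.sum_const, Finset.card_range, nsmul_eq_mul, mul_one, Nat.cast_add, Nat.cast_one]
    exact ENNReal.inv_mul_cancel (by simp) (by simp)⟩
  have hm_int : ∀ n (g : Y →ᵇ ℝ), ∫ y, g y ∂(m n)
      = ((n : ℝ) + 1)⁻¹ * ∑ k ∈ Finset.range (n + 1), g (f^[k] x) := by
    intro n g
    rw [integral_smul_measure, integral_finsetSum_measure (fun k _ => g.integrable _)]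
    have : ((n : ℝ≥0∞) + 1).toReal = n + 1 := by
      rw [ENNReal.toReal_add (by simp) (by simp)]; simp
    simp [integral_dirac, this]
  let p : ℕ → ProbabilityMeasure Y := fun n => ⟨m n, hm n⟩
  let F : Ultrafilter ℕ := Ultrafilter.of atTop
  have hF : (F : Filter ℕ) ≤ atTop := Ultrafilter.of_le _
  obtain ⟨μ, -, hμ⟩ := (isCompact_univ (X := ProbabilityMeasure Y)).ultrafilter_le_nhds
    (F.map p) (by simp)
  have hlim : Tendsto p F (𝓝 μ) := hμ
  refine ⟨μ, hf.measurable, ?_⟩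
  have hprob : IsProbabilityMeasure (Measure.map f (μ : Measure Y)) :=
    Measure.isProbabilityMeasure_map hf.measurable.aemeasurable
  refine ext_of_forall_integral_eq_of_IsFiniteMeasure fun g => ?_
  rw [integral_map hf.measurable.aemeasurable g.continuous.aestronglyMeasurable]
  have key := ProbabilityMeasure.tendsto_iff_forall_integral_tendsto.1 hlim
  have h1 := (key (g.compContinuous ⟨f, hf⟩)).sub (key g)
  have h2 : Tendsto (fun n : ℕ => ∫ y, (g.compContinuous ⟨f, hf⟩) y ∂(p n : Measure Y)
      - ∫ y, g y ∂(p n : Measure Y)) F (𝓝 0) := by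
    refine Tendsto.mono_left ?_ hF
    have hb : Tendsto (fun n : ℕ => 2 * ‖g‖ * ((n : ℝ) + 1)⁻¹) atTop (𝓝 0) := by
      simpa using (tendsto_one_div_add_atTop_nhds_zero_nat (𝕜 := ℝ)).const_mul (2 * ‖g‖)
    refine squeeze_zero_norm (fun n => ?_) hb
    simp only [p, ProbabilityMeasure.coe_mk, hm_int]
    rw [← mul_sub, ← Finset.sum_sub_distrib]
    have : ∀ k, (g.compContinuous ⟨f, hf⟩) (f^[k] x) - g (f^[k] x)
        = g (f^[k+1] x) - g (f^[k] x) := fun k => by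
      simp [Function.iterate_succ_apply']
    simp only [this]
    rw [Finset.sum_range_sub (fun k => g (f^[k] x)), norm_mul, mul_comm]
    have hpos : (0 : ℝ) ≤ ((n : ℝ) + 1)⁻¹ := by positivity
    rw [Real.norm_of_nonneg hpos]
    gcongr
    calc _ ≤ ‖g (f^[n+1] x)‖ + ‖g (f^[0] x)‖ := norm_sub_le _ _
      _ ≤ _ := by linarith [g.norm_coe_le_norm (f^[n+1] x), g.norm_coe_le_norm (f^[0] x)]
  have := tendsto_nhds_unique h1 h2
  exact sub_eq_zero.1 this

/-- A continuous self-map of a nonempty compact space has an ergodic probability measure. -/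
theorem exists_ergodic_probabilityMeasure {Y : Type*} [TopologicalSpace Y]
    [CompactSpace Y] [T2Space Y] [MeasurableSpace Y] [BorelSpace Y] [HasOuterApproxClosed Y]
    [Nonempty Y] {f : Y → Y} (hf : Continuous f) :
    ∃ μ : Measure Y, IsProbabilityMeasure μ ∧ Ergodic f μ := by
  let Φ : ProbabilityMeasure Y → C(Y, ℝ) → ℝ := fun μ g => ∫ y, g y ∂(μ : Measure Y)
  have hΦ : Continuous Φ := continuous_pi fun g =>
    ProbabilityMeasure.continuous_integral_continuousMap g
  have hinj : Function.Injective Φ := by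
    intro μ ν h
    have : (μ : Measure Y) = ν := ext_of_forall_integral_eq_of_IsFiniteMeasure fun g =>
      congrFun h g.toContinuousMap
    exact Subtype.ext this
  let I : Set (ProbabilityMeasure Y) := {μ | MeasurePreserving f (μ : Measure Y) μ}
  have hIc : IsClosed I := by
    have : I = {μ | μ.map hf.measurable.aemeasurable = μ} := by
      ext μ
      constructor
      · intro h
        exact Subtype.ext h.map_eq
      · intro h
        exact ⟨hf.measurable, congrArg Subtype.val h⟩
    rw [this]
    exact isClosed_eq (ProbabilityMeasure.continuous_map hf) continuous_id
  obtain ⟨v, hv⟩ := (hIc.isCompact.image hΦ).extremePoints_nonempty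
    (Set.Nonempty.image Φ (exists_measurePreserving_probabilityMeasure hf))
  obtain ⟨μ, hμ, rfl⟩ := hv.1
  refine ⟨μ, inferInstance, Ergodic.of_mem_extremePoints ?_⟩
  rw [mem_extremePoints_iff_left]
  refine ⟨⟨hμ, inferInstance⟩, ?_⟩
  rintro ν₁ ⟨h₁, p₁⟩ ν₂ ⟨h₂, p₂⟩ ⟨a, b, ha, hb, hab, hμe⟩
  rw [mem_extremePoints_iff_left] at hv
  have ha' : a ≠ ∞ := fun h => by simp [h] at hab
  have hb' : b ≠ ∞ := fun h => by simp [h] at hab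
  have := hv.2 (Φ ⟨ν₁, p₁⟩) ⟨⟨ν₁, p₁⟩, h₁, rfl⟩ (Φ ⟨ν₂, p₂⟩) ⟨⟨ν₂, p₂⟩, h₂, rfl⟩
    ⟨a.toReal, b.toReal, ENNReal.toReal_pos ha.ne' ha', ENNReal.toReal_pos hb.ne' hb',
      by rw [← ENNReal.toReal_add ha' hb', hab]; rfl, ?_⟩
  · exact congrArg Subtype.val (hinj this)
  · funext g
    simp only [Φ, Pi.add_apply, Pi.smul_apply, ProbabilityMeasure.coe_mk, ← hμe]
    have hg : ∀ (ν : Measure Y) [IsProbabilityMeasure ν], Integrable g ν := fun ν _ =>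
      (BoundedContinuousFunction.mkOfCompact g).integrable ν
    rw [integral_add_measure ((hg ν₁).smul_measure ha') ((hg ν₂).smul_measure hb'),
      integral_smul_measure, integral_smul_measure]

/-- A continuous self-map has an ergodic probability measure carried by any given nonempty compact
forward invariant set. -/
theorem exists_ergodic_of_isCompact {Y : Type*} [TopologicalSpace Y]
    [TopologicalSpace.MetrizableSpace Y] [MeasurableSpace Y] [BorelSpace Y]
    {f : Y → Y} (hf : Continuous f) {X : Set Y} (hX : IsCompact X) (hne : X.Nonempty)
    (hfX : Set.MapsTo f X X) :
    ∃ μ : Measure Y, IsProbabilityMeasure μ ∧ Ergodic f μ ∧ ∀ᵐ y ∂μ, y ∈ X := by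
  have := isCompact_iff_compactSpace.1 hX
  have := hne.to_subtype
  obtain ⟨μ, hμ, he⟩ := exists_ergodic_probabilityMeasure (hf.restrict hfX)
  have hval : Measurable (Subtype.val : X → Y) := measurable_subtype_coe
  refine ⟨μ.map Subtype.val, Measure.isProbabilityMeasure_map hval.aemeasurable, ?_, ?_⟩
  · exact (hval.measurePreserving μ).ergodic_of_ergodic_semiconj he hf.measurable fun _ => rfl
  · exact (ae_map_iff hval.aemeasurable hX.measurableSet).2 (ae_of_all _ fun y => y.2)

/-- The products of the family `T` along words of length `n` grow at most like `r ^ n`. -/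
def GrowthLE {ι E : Type*} [NormedAddCommGroup E] [NormedSpace ℂ E] (T : ι → E →L[ℂ] E)
    (r : ℝ) : Prop :=
  ∃ C : ℝ, ∀ w : List ι, ‖(w.map T).prod‖ ≤ C * r ^ w.length

/-- The factor `i m, …, i (m + n - 1)` of the sequence `i`. -/
def factor {α : Type*} (i : ℕ → α) (m n : ℕ) : List α := List.ofFn fun t : Fin n => i (m + t)

@[simp]
theorem length_factor {α : Type*} (i : ℕ → α) (m n : ℕ) : (factor i m n).length = n := by
  simp [factor]

theorem factor_add {α : Type*} (i : ℕ → α) (m a b : ℕ) :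
    factor i m (a + b) = factor i m a ++ factor i (m + a) b := by
  refine List.ext_getElem (by simp) fun k h₁ h₂ => ?_
  rw [List.getElem_append]
  split_ifs with h
  · simp [factor]
  · simp only [length_factor, not_lt] at h
    simp only [factor, List.getElem_ofFn, List.length_ofFn]
    congr 1
    omega

section Growth

variable {ι E F : Type*} [NormedAddCommGroup E] [NormedSpace ℂ E]
  [NormedAddCommGroup F] [NormedSpace ℂ F]

theorem GrowthLE.mono {T : ι → E →L[ℂ] E} {r r' : ℝ} (h : GrowthLE T r) (hr : 0 ≤ r)
    (hrr' : r ≤ r') : GrowthLE T r' := by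
  obtain ⟨C, hC⟩ := h
  refine ⟨C, fun w => (hC w).trans ?_⟩
  have hC0 : 0 ≤ C := by simpa using (norm_nonneg _).trans (hC [])
  gcongr

theorem GrowthLE.exists_pos {T : ι → E →L[ℂ] E} {r : ℝ} (h : GrowthLE T r) (hr : 0 ≤ r) :
    ∃ C > 0, ∀ w : List ι, ‖(w.map T).prod‖ ≤ C * r ^ w.length := by
  obtain ⟨C, hC⟩ := h
  refine ⟨max C 1, by positivity, fun w => (hC w).trans ?_⟩
  gcongr
  exact le_max_left _ _

theorem GrowthLE.of_compression {T : ι → E →L[ℂ] E} {R : ι → F →L[ℂ] F} {q : E →L[ℂ] F}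
    {j : F →L[ℂ] E} (h : ∀ w : List ι, (w.map R).prod = q ∘L (w.map T).prod ∘L j) {r : ℝ}
    (hT : GrowthLE T r) : GrowthLE R r := by
  obtain ⟨C, hC⟩ := hT
  refine ⟨‖q‖ * C * ‖j‖, fun w => ?_⟩
  rw [h w]
  calc _ ≤ ‖q‖ * (‖(w.map T).prod‖ * ‖j‖) :=
        (ContinuousLinearMap.opNorm_comp_le _ _).trans
          (by gcongr; exact ContinuousLinearMap.opNorm_comp_le _ _)
    _ ≤ ‖q‖ * (C * r ^ w.length * ‖j‖) := by gcongr; exact hC w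
    _ = _ := by ring

theorem prod_comp_of_comp_eq {T : ι → E →L[ℂ] E} {R : ι → F →L[ℂ] F} {j : F →L[ℂ] E}
    (h : ∀ k, T k ∘L j = j ∘L R k) (w : List ι) :
    (w.map T).prod ∘L j = j ∘L (w.map R).prod := by
  induction w with
  | nil => ext; simp
  | cons k w ih =>
    ext x
    have h₁ := fun y => DFunLike.congr_fun (h k) y
    have h₂ := fun y => DFunLike.congr_fun ih y
    simp only [ContinuousLinearMap.comp_apply] at h₁ h₂
    simp [h₁, h₂]

/-- Growth of a block triangular family is controlled by the growth of the diagonal blocks. -/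
theorem GrowthLE.of_blocks [Finite ι] {W : Type*} [NormedAddCommGroup W] [NormedSpace ℂ W]
    {T : ι → E →L[ℂ] E} {R : ι → W →L[ℂ] W} {Q : ι → F →L[ℂ] F}
    {p : E →L[ℂ] W} {i : W →L[ℂ] E} {q : E →L[ℂ] F} {j : F →L[ℂ] E}
    (hsum : ∀ x, i (p x) + j (q x) = x) (hqj : ∀ x, q (j x) = x)
    (hR : ∀ k, T k ∘L i = i ∘L R k) (hQ : ∀ k, q ∘L T k = Q k ∘L q) {r r' : ℝ} (hr : 0 < r)
    (hrr' : r < r') (hRr : GrowthLE R r) (hQr : GrowthLE Q r) : GrowthLE T r' := by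
  obtain ⟨C, hC0, hC⟩ := hRr.exists_pos hr.le
  obtain ⟨C', hC'0, hC'⟩ := hQr.exists_pos hr.le
  obtain ⟨D, hD⟩ : ∃ D, ∀ k, ‖p ∘L T k ∘L j‖ ≤ D := by
    obtain ⟨D, hD⟩ := (Set.finite_range fun k => ‖p ∘L T k ∘L j‖).bddAbove
    exact ⟨D, fun k => hD ⟨k, rfl⟩⟩
  have hRw := prod_comp_of_comp_eq hR
  set B := ‖i‖ * C * |D| * C' / r with hB
  have hB0 : 0 ≤ B := by positivity
  set A := ‖j‖ * C' with hA
  have key : ∀ w v : List ι, ‖(w.map T).prod ∘L j ∘L (v.map Q).prod‖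
      ≤ (A + w.length * B) * r ^ (w.length + v.length) := by
    intro w
    induction w using List.reverseRecOn with
    | nil =>
      intro v
      simp only [List.map_nil, List.prod_nil, List.length_nil, CharP.cast_eq_zero, zero_mul,
        add_zero, zero_add]
      calc _ ≤ ‖j‖ * ‖(v.map Q).prod‖ := ContinuousLinearMap.opNorm_comp_le _ _
        _ ≤ ‖j‖ * (C' * r ^ v.length) := by gcongr; exact hC' v
        _ = _ := by rw [hA]; ring
    | append_singleton w k ih =>
      intro v
      have hsplit : ((w ++ [k]).map T).prod ∘L j ∘L (v.map Q).prod
          = i ∘L (w.map R).prod ∘L (p ∘L T k ∘L j) ∘L (v.map Q).prod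
            + (w.map T).prod ∘L j ∘L ((k :: v).map Q).prod := by
        ext x
        have h₁ := fun y => DFunLike.congr_fun (hRw w) y
        have h₂ := fun y => DFunLike.congr_fun (hQ k) y
        simp only [ContinuousLinearMap.comp_apply] at h₁ h₂
        simp only [List.map_append, List.prod_append, List.map_cons, List.map_nil, List.prod_cons,
          List.prod_nil, mul_one, ContinuousLinearMap.comp_apply, mul_apply_eq_comp,
          add_apply]
        set z := (v.map Q).prod x
        conv_lhs => rw [← hsum (T k (j z)), map_add, h₁, h₂, hqj]
      have h₁ : ‖i ∘L (w.map R).prod ∘L (p ∘L T k ∘L j) ∘L (v.map Q).prod‖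
          ≤ ‖i‖ * (C * r ^ w.length * (|D| * (C' * r ^ v.length))) := by
        refine (ContinuousLinearMap.opNorm_comp_le _ _).trans ?_
        gcongr
        refine (ContinuousLinearMap.opNorm_comp_le _ _).trans ?_
        gcongr
        · exact hC w
        refine (ContinuousLinearMap.opNorm_comp_le _ _).trans ?_
        gcongr
        · exact (hD k).trans (le_abs_self D)
        · exact hC' v
      have h₂ : ‖i‖ * (C * r ^ w.length * (|D| * (C' * r ^ v.length)))
          = B * r ^ ((w ++ [k]).length + v.length) := by
        simp only [List.length_append, List.length_singleton, hB, pow_add]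
        field_simp
      have h₃ := ih (k :: v)
      have h₄ : w.length + (k :: v).length = (w ++ [k]).length + v.length := by
        simp only [List.length_append, List.length_cons, List.length_nil]
        omega
      rw [h₄] at h₃
      rw [hsplit]
      calc _ ≤ _ := norm_add_le _ _
        _ ≤ B * r ^ ((w ++ [k]).length + v.length)
            + (A + w.length * B) * r ^ ((w ++ [k]).length + v.length) :=
          add_le_add (h₁.trans_eq h₂) h₃
        _ = _ := by simp only [List.length_append, List.length_singleton]; push_cast; ring
  have hr'0 : 0 < r' := hr.trans hrr'
  obtain ⟨D', hD'⟩ : ∃ D', ∀ n : ℕ, n * (r / r') ^ n ≤ D' := by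
    obtain ⟨D', hD'⟩ := (tendsto_self_mul_const_pow_of_lt_one (r := r / r') (by positivity)
      ((div_lt_one hr'0).2 hrr')).bddAbove_range
    exact ⟨D', fun n => hD' ⟨n, rfl⟩⟩
  refine ⟨‖i‖ * C * ‖p‖ + (A + D' * B) * ‖q‖, fun w => ?_⟩
  have hdecomp : (w.map T).prod
      = i ∘L (w.map R).prod ∘L p + ((w.map T).prod ∘L j ∘L (([] : List ι).map Q).prod) ∘L q := by
    ext x
    have h₁ := fun y => DFunLike.congr_fun (hRw w) y
    simp only [ContinuousLinearMap.comp_apply] at h₁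
    conv_lhs => rw [← hsum x, map_add, h₁]
    simp
  have hpow : r ^ w.length ≤ r' ^ w.length := by gcongr
  have h₁ : ‖i ∘L (w.map R).prod ∘L p‖ ≤ ‖i‖ * (C * r' ^ w.length * ‖p‖) := by
    refine (ContinuousLinearMap.opNorm_comp_le _ _).trans ?_
    gcongr
    refine (ContinuousLinearMap.opNorm_comp_le _ _).trans ?_
    gcongr
    exact (hC w).trans (by gcongr)
  have h₂ := key w []
  have h₃ : (A + w.length * B) * r ^ w.length ≤ (A + D' * B) * r' ^ w.length := by
    have h₄ : (w.length : ℝ) * r ^ w.length ≤ D' * r' ^ w.length := by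
      have := hD' w.length
      rwa [div_pow, mul_div_assoc', div_le_iff₀ (by positivity)] at this
    have hA0 : 0 ≤ A := by positivity
    nlinarith [mul_le_mul_of_nonneg_left hpow hA0, mul_le_mul_of_nonneg_right h₄ hB0]
  rw [hdecomp]
  calc _ ≤ _ := norm_add_le _ _
    _ ≤ ‖i‖ * (C * r' ^ w.length * ‖p‖) + (A + D' * B) * r' ^ w.length * ‖q‖ := by
      gcongr
      refine (ContinuousLinearMap.opNorm_comp_le _ _).trans ?_
      gcongr
      exact h₂.trans (by simpa using h₃)
    _ = _ := by ring

end Growth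

section Bounded

variable {E : Type*} [NormedAddCommGroup E] [NormedSpace ℂ E]

theorem exists_one_lt_pow_lt (L : ℕ) : ∃ r : ℝ, 1 < r ∧ r ^ L ≤ 3 / 2 := by
  have h : ((3 / 2 : ℝ) ^ (((L + 1 : ℕ) : ℝ)⁻¹)) ^ (L + 1) = 3 / 2 :=
    Real.rpow_inv_natCast_pow (by norm_num) (by omega)
  have h₁ : 1 < (3 / 2 : ℝ) ^ (((L + 1 : ℕ) : ℝ)⁻¹) :=
    Real.one_lt_rpow (by norm_num) (by positivity)
  exact ⟨_, h₁, (pow_le_pow_right₀ h₁.le (Nat.le_succ L)).trans_eq h⟩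

/-- A family with subexponential growth has a nonzero vector with bounded orbit. -/
theorem exists_ne_zero_bounded_orbit {ι : Type*} [FiniteDimensional ℂ E] [Nontrivial E]
    {T : ι → E →L[ℂ] E}
    (hT : ∀ r > 1, GrowthLE T r) : ∃ x ≠ 0, ∃ C, ∀ w : List ι, ‖(w.map T).prod x‖ ≤ C := by
  by_contra! H
  have : ProperSpace E := FiniteDimensional.proper ℂ E
  obtain ⟨L, hL⟩ : ∃ L : ℕ, ∀ x : E, ∃ w : List ι, w.length ≤ L ∧
      2 * ‖x‖ ≤ ‖(w.map T).prod x‖ := by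
    obtain ⟨t, ht⟩ := (isCompact_sphere (0 : E) 1).elim_finite_subcover
      (fun w : List ι => {x | 2 < ‖(w.map T).prod x‖})
      (fun w => isOpen_lt continuous_const (by fun_prop))
      (fun x hx => by
        have hx0 : x ≠ 0 := by rintro rfl; simp at hx
        obtain ⟨w, hw⟩ := H x hx0 2
        exact Set.mem_iUnion.2 ⟨w, hw⟩)
    refine ⟨t.sup List.length, fun x => ?_⟩
    rcases eq_or_ne x 0 with rfl | hx
    · exact ⟨[], by simp, by simp⟩
    have hx' : 0 < ‖x‖ := norm_pos_iff.2 hx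
    have hmem : ((‖x‖⁻¹ : ℝ) : ℂ) • x ∈ Metric.sphere (0 : E) 1 := by
      simp [norm_smul, hx'.ne']
    obtain ⟨w, hwt, hw⟩ := Set.mem_iUnion₂.1 (ht hmem)
    refine ⟨w, Finset.le_sup (f := List.length) hwt, ?_⟩
    simp only [Set.mem_ofPred_eq, map_smul, norm_smul, Complex.norm_real, norm_inv, norm_norm] at hw
    rw [inv_mul_eq_div, lt_div_iff₀ hx'] at hw
    exact hw.le
  have iter : ∀ (m : ℕ) (x : E), ∃ w : List ι, w.length ≤ m * L ∧
      2 ^ m * ‖x‖ ≤ ‖(w.map T).prod x‖ := by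
    intro m
    induction m with
    | zero => exact fun x => ⟨[], by simp, by simp⟩
    | succ m ih =>
      intro x
      obtain ⟨w, hw, hwx⟩ := ih x
      obtain ⟨v, hv, hvx⟩ := hL ((w.map T).prod x)
      refine ⟨v ++ w, by rw [List.length_append]; linarith, ?_⟩
      rw [List.map_append, List.prod_append, mul_apply_eq_comp, pow_succ]
      linarith
  obtain ⟨r, hr, hrL⟩ := exists_one_lt_pow_lt L
  obtain ⟨C, hC0, hC⟩ := (hT r hr).exists_pos (by linarith)
  obtain ⟨x, hx⟩ := exists_ne (0 : E)
  have hx' : 0 < ‖x‖ := norm_pos_iff.2 hx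
  obtain ⟨m, hm⟩ := pow_unbounded_of_one_lt C (show (1 : ℝ) < 4 / 3 by norm_num)
  obtain ⟨w, hw, hwx⟩ := iter m x
  have h₁ : ‖(w.map T).prod x‖ ≤ C * (3 / 2) ^ m * ‖x‖ := by
    refine (ContinuousLinearMap.le_opNorm _ _).trans ?_
    gcongr
    refine (hC w).trans ?_
    gcongr
    calc r ^ w.length ≤ r ^ (m * L) := pow_le_pow_right₀ hr.le hw
      _ = (r ^ L) ^ m := by rw [mul_comm, pow_mul]
      _ ≤ (3 / 2) ^ m := by gcongr
  have h₂ : (2 : ℝ) ^ m ≤ C * (3 / 2) ^ m := le_of_mul_le_mul_right (hwx.trans h₁) hx'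
  have h₃ : (2 : ℝ) ^ m = (4 / 3) ^ m * (3 / 2) ^ m := by rw [← mul_pow]; norm_num
  rw [h₃] at h₂
  exact absurd (le_of_mul_le_mul_right h₂ (by positivity)) (not_le.2 hm)

/-- If the growth is not exponentially small, then for every `n > 0` some word of length `n`
does not contract. -/
theorem exists_one_le_norm_prod {ι : Type*} [Finite ι] {T : ι → E →L[ℂ] E} {M : ℝ}
    (hM : ∀ w : List ι, ‖(w.map T).prod‖ ≤ M) (hT : ∀ r, 0 < r → r < 1 → ¬ GrowthLE T r)
    {n : ℕ} (hn : n ≠ 0) : ∃ w : List ι, w.length = n ∧ 1 ≤ ‖(w.map T).prod‖ := by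
  by_contra! H
  have hM0 : 0 ≤ M := (norm_nonneg _).trans (hM [])
  obtain ⟨c, hc0, hc1, hc⟩ : ∃ c : ℝ, 0 < c ∧ c < 1 ∧
      ∀ w : List ι, w.length = n → ‖(w.map T).prod‖ ≤ c := by
    have hfin := List.finite_length_eq ι n
    obtain ⟨b, hb⟩ : ∃ b < (1 : ℝ), ∀ w ∈ {l : List ι | l.length = n}, ‖(w.map T).prod‖ ≤ b := by
      rcases Set.eq_empty_or_nonempty {l : List ι | l.length = n} with he | hne
      · exact ⟨0, by norm_num, by simp [he]⟩
      · obtain ⟨w₀, hw₀, hmax⟩ := Set.exists_max_image _ (fun w => ‖(w.map T).prod‖) hfin hne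
        exact ⟨_, H w₀ hw₀, hmax⟩
    refine ⟨max b (1 / 2), by positivity, max_lt hb.1 (by norm_num), fun w hw => ?_⟩
    exact (hb.2 w hw).trans (le_max_left _ _)
  set r := c ^ ((n : ℝ)⁻¹) with hr
  have hrn : r ^ n = c := Real.rpow_inv_natCast_pow hc0.le hn
  have hr0 : 0 < r := by positivity
  have hr1 : r < 1 := Real.rpow_lt_one hc0.le hc1 (by positivity)
  refine hT r hr0 hr1 ⟨M / c, fun w => ?_⟩
  induction hl : w.length using Nat.strong_induction_on generalizing w with
  | _ l ih =>
    by_cases h : l < n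
    · calc _ ≤ M := hM w
        _ = M / c * c := by field_simp
        _ ≤ M / c * r ^ l := by
          rw [← hrn]
          exact mul_le_mul_of_nonneg_left (pow_le_pow_of_le_one hr0.le hr1.le h.le) (by positivity)
    · have h₁ := ih (l - n) (by omega) (w.drop n) (by simp [hl])
      have h₂ := hc (w.take n) (by simp; omega)
      rw [← List.take_append_drop n w, List.map_append, List.prod_append]
      calc _ ≤ _ := norm_mul_le _ _
        _ ≤ c * (M / c * r ^ (l - n)) := by gcongr
        _ = M / c * (r ^ n * r ^ (l - n)) := by rw [hrn]; ring
        _ = _ := by rw [← pow_add]; congr 2; omega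

/-- If there are arbitrarily long finite words all of whose factors satisfy `P`, then there is an
infinite sequence all of whose factors satisfy `P`. -/
theorem exists_sequence_of_forall_exists_word {K : ℕ} (P : List (Fin K) → Prop)
    (h : ∀ n, ∃ w : List (Fin K), w.length = n ∧ ∀ u, u <:+: w → P u) :
    ∃ i : ℕ → Fin K, ∀ m n, P (factor i m n) := by
  let V : ∀ n, Set (Fin n → Fin K) := fun n => {w | ∀ u, u <:+: List.ofFn w → P u}
  let G : ℕ → Set (ℕ → Fin K) := fun n => (fun i (t : Fin n) => i t) ⁻¹' V n
  have hG : ∀ n, IsClosed (G n) := fun n =>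
    (isClosed_discrete (V n)).preimage (by fun_prop)
  have hfac : ∀ (i : ℕ → Fin K) n, (List.ofFn fun t : Fin n => i t) = factor i 0 n := by
    intro i n
    simp [factor]
  have hinfix : ∀ (i : ℕ → Fin K) m n, factor i m n <:+: factor i 0 (m + n) := by
    intro i m n
    rw [factor_add, zero_add]
    exact (List.suffix_append _ _).isInfix
  obtain ⟨i, hi⟩ : (⋂ n, G n).Nonempty := by
    refine IsCompact.nonempty_iInter_of_sequence_nonempty_isCompact_isClosed G (fun n i hi => ?_)
      (fun n => ?_) (hG 0).isCompact hG
    · intro u hu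
      refine hi u (hu.trans ?_)
      simp only [hfac]
      rw [factor_add]
      exact (List.prefix_append _ _).isInfix
    · obtain ⟨w, hw, hP⟩ := h (n + 1)
      have hpos : 0 < w.length := by omega
      let k₀ : Fin K := w[0]
      refine ⟨fun t => w.getD t k₀, fun u hu => hP u (hu.trans ?_)⟩
      have : (List.ofFn fun t : Fin n => w.getD t k₀) = w.take n := by
        refine List.ext_getElem (by simp; omega) fun t h₁ h₂ => ?_
        simp only [List.length_take] at h₂
        rw [List.getElem_ofFn, List.getElem_take]
        exact List.getD_eq_getElem _ _ (by omega)
      simp only [this]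
      exact (List.take_prefix _ _).isInfix
  refine ⟨i, fun m n => ?_⟩
  have := Set.mem_iInter.1 hi (m + n)
  refine this _ ?_
  simp only [hfac]
  exact hinfix i m n

end Bounded

section Eigenvalues

variable {E F : Type*} [NormedAddCommGroup E] [NormedSpace ℂ E] [FiniteDimensional ℂ E]
  [NormedAddCommGroup F] [NormedSpace ℂ F] [FiniteDimensional ℂ F]

theorem exists_half_le_norm_eigenvalue (A : E →L[ℂ] E)
    (h : ‖(1 - A).det‖ < (1 / 2) ^ Module.finrank ℂ E) :
    ∃ z : ℂ, 1 / 2 ≤ ‖z‖ ∧ ∃ x ≠ 0, A x = z • x := by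
  by_contra! H
  refine absurd h (not_lt.2 ?_)
  have hev : (1 - A).det = (LinearMap.charpoly (A : E →ₗ[ℂ] E)).eval 1 := by
    rw [LinearMap.eval_charpoly, map_one]
    rfl
  have hs := IsAlgClosed.splits (LinearMap.charpoly (A : E →ₗ[ℂ] E))
  rw [hev, hs.eval_eq_prod_roots_of_monic (LinearMap.charpoly_monic _)]
  have hcard : (LinearMap.charpoly (A : E →ₗ[ℂ] E)).roots.card = Module.finrank ℂ E := by
    rw [← hs.natDegree_eq_card_roots, LinearMap.charpoly_natDegree]
  have hroot : ∀ z ∈ (LinearMap.charpoly (A : E →ₗ[ℂ] E)).roots, ‖z‖ < 1 / 2 := by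
    intro z hz
    by_contra! hz'
    have := (Module.End.hasEigenvalue_iff_isRoot_charpoly (A : E →ₗ[ℂ] E) z).2
      (Polynomial.isRoot_of_mem_roots hz)
    obtain ⟨x, hx⟩ := this.exists_hasEigenvector
    exact H z hz' x hx.2 hx.apply_eq_smul
  rw [← hcard]
  generalize (LinearMap.charpoly (A : E →ₗ[ℂ] E)).roots = s at hroot
  induction s using Multiset.induction_on with
  | empty => simp
  | cons z s ih =>
    simp only [Multiset.map_cons, Multiset.prod_cons, Multiset.card_cons, norm_mul, pow_succ']
    have h₁ := hroot z (Multiset.mem_cons_self _ _)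
    have h₂ : 1 / 2 ≤ ‖(1 : ℂ) - z‖ := by
      have := norm_sub_norm_le (1 : ℂ) z
      rw [norm_one] at this
      linarith
    exact mul_le_mul h₂ (ih fun y hy => hroot y (Multiset.mem_cons_of_mem hy)) (by positivity)
      (by positivity)

theorem det_one_sub_eq_zero {P Q : E →L[ℂ] E} (hP : P ≠ 0) (h : P * Q = P) :
    (1 - Q).det = 0 := by
  by_contra hdet
  have hu : IsUnit ((1 - Q : E →L[ℂ] E) : E →ₗ[ℂ] E) :=
    (LinearMap.isUnit_iff_isUnit_det _).2 (isUnit_iff_ne_zero.2 hdet)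
  have hsurj := ((Module.End.isUnit_iff _).1 hu).2
  apply hP
  ext x
  obtain ⟨y, rfl⟩ := hsurj x
  have := DFunLike.congr_fun h y
  simp only [mul_apply_eq_comp] at this
  simp [this]

/-- Along a sequence whose factors have products bounded from above and from below, arbitrarily
long factors have an eigenvalue of modulus at least `1 / 2`. -/
theorem exists_long_word_eigenvalue {ι : Type*} {T : ι → E →L[ℂ] E} {M c : ℝ} (hc : 0 < c)
    (hM : ∀ w : List ι, ‖(w.map T).prod‖ ≤ M) {i : ℕ → ι}
    (hi : ∀ m n, c ≤ ‖((factor i m n).map T).prod‖) (N : ℕ) :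
    ∃ w : List ι, N ≤ w.length ∧ ∃ z : ℂ, 1 / 2 ≤ ‖z‖ ∧ ∃ x ≠ 0, (w.map T).prod x = z • x := by
  have : ProperSpace (E →L[ℂ] E) := FiniteDimensional.proper ℂ _
  have hball : ∀ w : List ι, (w.map T).prod ∈ Metric.closedBall (0 : E →L[ℂ] E) M := fun w => by
    simpa using hM w
  obtain ⟨P, -, φ, hφ, hP⟩ := tendsto_subseq_of_bounded Metric.isBounded_closedBall
    (x := fun n => ((factor i 0 n).map T).prod) fun n => hball _
  let v : ℕ → List ι := fun k => factor i (φ k) (φ (k + N) - φ k)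
  obtain ⟨Q, -, χ, hχ, hQ⟩ := tendsto_subseq_of_bounded Metric.isBounded_closedBall
    (x := fun k => ((v k).map T).prod) fun n => hball _
  have hv : ∀ k, ((factor i 0 (φ k)).map T).prod * ((v k).map T).prod
      = ((factor i 0 (φ (k + N))).map T).prod := by
    intro k
    have h₁ : φ k ≤ φ (k + N) := hφ.monotone (Nat.le_add_right _ _)
    rw [← List.prod_append, ← List.map_append]
    have := factor_add i 0 (φ k) (φ (k + N) - φ k)
    rw [zero_add, Nat.add_sub_cancel' h₁] at this
    rw [this]
  have hPQ : P * Q = P := by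
    have h₁ := (hP.comp hχ.tendsto_atTop).mul hQ
    have h₂ := (hP.comp (tendsto_add_atTop_nat N)).comp hχ.tendsto_atTop
    refine tendsto_nhds_unique (h₁.congr fun k => ?_) h₂
    exact hv (χ k)
  have hP0 : P ≠ 0 := by
    rintro rfl
    have := ge_of_tendsto' hP.norm fun k => hi 0 (φ k)
    rw [norm_zero] at this
    linarith
  have hdet := det_one_sub_eq_zero hP0 hPQ
  have hlim : Tendsto (fun k => ‖(1 - ((v (χ k)).map T).prod).det‖) atTop (𝓝 0) := by
    have := ((ContinuousLinearMap.continuous_det (𝕜 := ℂ) (E := E)).tendsto (1 - Q)).comp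
      (tendsto_const_nhds.sub hQ)
    rw [hdet] at this
    simpa using this.norm
  obtain ⟨k, hk⟩ := (hlim.eventually_lt_const
    (show (0 : ℝ) < (1 / 2) ^ Module.finrank ℂ E by positivity)).exists
  refine ⟨v (χ k), ?_, exists_half_le_norm_eigenvalue _ hk⟩
  simp only [v, length_factor]
  have := hφ.add_le_nat N (χ k)
  rw [add_comm N (χ k)] at this
  omega

/-- A family of operators that is neither exponentially small nor exponentially large has an
infinite sequence with products bounded away from zero, and arbitrarily long products with an
eigenvalue of modulus at least `1 / 2`. -/
def HasMaximalWords {K : ℕ} (T : Fin K → E →L[ℂ] E) : Prop :=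
  (∃ c > 0, ∃ i : ℕ → Fin K, ∀ m n, c ≤ ‖((factor i m n).map T).prod‖) ∧
  ∀ N, ∃ w : List (Fin K), N ≤ w.length ∧
    ∃ z : ℂ, 1 / 2 ≤ ‖z‖ ∧ ∃ x ≠ 0, (w.map T).prod x = z • x

theorem HasMaximalWords.of_bounded {K : ℕ} {T : Fin K → E →L[ℂ] E} {M : ℝ}
    (hM : ∀ w : List (Fin K), ‖(w.map T).prod‖ ≤ M)
    (hT : ∀ r, 0 < r → r < 1 → ¬ GrowthLE T r) : HasMaximalWords T := by
  have h₁ : ∃ c > 0, ∃ i : ℕ → Fin K, ∀ m n, c ≤ ‖((factor i m n).map T).prod‖ := by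
    have hM1 : ∀ w : List (Fin K), ‖(w.map T).prod‖ ≤ max M 1 := fun w =>
      (hM w).trans (le_max_left _ _)
    set M' := max M 1
    have hM' : 0 < M' := by positivity
    refine ⟨1 / (M' * M'), by positivity, exists_sequence_of_forall_exists_word
      (fun u => 1 / (M' * M') ≤ ‖(u.map T).prod‖) fun n => ?_⟩
    obtain ⟨w, hw, hw1⟩ := exists_one_le_norm_prod hM hT (Nat.succ_ne_zero n)
    refine ⟨w.take n, by simp [hw], fun u hu => ?_⟩
    obtain ⟨s, t, rfl⟩ := hu.trans (List.take_prefix n w).isInfix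
    rw [div_le_iff₀ (by positivity)]
    simp only [List.map_append, List.prod_append] at hw1
    calc (1 : ℝ) ≤ _ := hw1
      _ ≤ ‖(s.map T).prod‖ * ‖(u.map T).prod‖ * ‖(t.map T).prod‖ :=
        (norm_mul_le _ _).trans (by gcongr; exact norm_mul_le _ _)
      _ ≤ M' * ‖(u.map T).prod‖ * M' := by gcongr <;> exact hM1 _
      _ = _ := by ring
  obtain ⟨c, hc, i, hi⟩ := h₁
  exact ⟨⟨c, hc, i, hi⟩, exists_long_word_eigenvalue hc hM hi⟩

/-- An eigenvalue of a quotient operator is an eigenvalue of the operator. -/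
theorem exists_eigenvector_of_comp_eq {A : E →L[ℂ] E} {B : F →L[ℂ] F} {q : E →L[ℂ] F}
    (hq : Function.Surjective q) (h : q ∘L A = B ∘L q) {z : ℂ} (hB : ∃ x ≠ 0, B x = z • x) :
    ∃ x ≠ 0, A x = z • x := by
  by_contra! H
  have hinj : Function.Injective ((A : E →ₗ[ℂ] E) - z • (1 : E →ₗ[ℂ] E)) := by
    rw [injective_iff_map_eq_zero]
    intro x hx
    by_contra hx0
    exact H x hx0 (sub_eq_zero.1 (by simpa using hx))
  have hsurj := LinearMap.surjective_of_injective hinj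
  have hsurjB : Function.Surjective ((B : F →ₗ[ℂ] F) - z • (1 : F →ₗ[ℂ] F)) := by
    intro y
    obtain ⟨x, rfl⟩ := hq y
    obtain ⟨u, rfl⟩ := hsurj x
    have := DFunLike.congr_fun h u
    simp only [ContinuousLinearMap.comp_apply] at this
    exact ⟨q u, by simp [this]⟩
  obtain ⟨x, hx0, hx⟩ := hB
  refine hx0 (LinearMap.injective_iff_surjective.2 hsurjB ?_)
  simp [hx]

end Eigenvalues

theorem HasMaximalWords.of_compression {K : ℕ} {E F : Type*} [NormedAddCommGroup E]
    [NormedSpace ℂ E] [NormedAddCommGroup F] [NormedSpace ℂ F] {T : Fin K → E →L[ℂ] E}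
    {R : Fin K → F →L[ℂ] F} {q : E →L[ℂ] F} {j : F →L[ℂ] E}
    (h : ∀ w : List (Fin K), (w.map R).prod = q ∘L (w.map T).prod ∘L j)
    (heig : ∀ (w : List (Fin K)) (z : ℂ), (∃ x ≠ 0, (w.map R).prod x = z • x) →
      ∃ x ≠ 0, (w.map T).prod x = z • x)
    (hR : HasMaximalWords R) : HasMaximalWords T := by
  obtain ⟨⟨c, hc, i, hi⟩, hw⟩ := hR
  refine ⟨⟨c / ((‖q‖ + 1) * (‖j‖ + 1)), by positivity, i, fun m n => ?_⟩, fun N => ?_⟩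
  · rw [div_le_iff₀ (by positivity)]
    refine (hi m n).trans ?_
    rw [h]
    calc _ ≤ ‖q‖ * (‖((factor i m n).map T).prod‖ * ‖j‖) :=
          (ContinuousLinearMap.opNorm_comp_le _ _).trans
            (by gcongr; exact ContinuousLinearMap.opNorm_comp_le _ _)
      _ ≤ (‖q‖ + 1) * (‖((factor i m n).map T).prod‖ * (‖j‖ + 1)) := by gcongr <;> simp
      _ = _ := by ring
  · obtain ⟨w, hN, z, hz, hx⟩ := hw N
    exact ⟨w, hN, z, hz, heig w z hx⟩

section Recursion

variable {K : ℕ}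

theorem prod_comp_eq_of_comp_eq {ι E F : Type*} [NormedAddCommGroup E] [NormedSpace ℂ E]
    [NormedAddCommGroup F] [NormedSpace ℂ F] {T : ι → E →L[ℂ] E} {Q : ι → F →L[ℂ] F}
    {q : E →L[ℂ] F} (h : ∀ k, q ∘L T k = Q k ∘L q) (w : List ι) :
    q ∘L (w.map T).prod = (w.map Q).prod ∘L q := by
  induction w with
  | nil => ext; simp
  | cons k w ih =>
    ext x
    have h₁ := fun y => DFunLike.congr_fun (h k) y
    have h₂ := fun y => DFunLike.congr_fun ih y
    simp only [ContinuousLinearMap.comp_apply] at h₁ h₂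
    simp [h₁, h₂]

/-- The invariant subspace of vectors with bounded orbit. -/
def boundedOrbits {ι E : Type*} [NormedAddCommGroup E] [NormedSpace ℂ E] (T : ι → E →L[ℂ] E) :
    Submodule ℂ E where
  carrier := {x | ∃ C, ∀ w : List ι, ‖(w.map T).prod x‖ ≤ C}
  zero_mem' := ⟨0, fun w => by simp⟩
  add_mem' := by
    rintro x y ⟨C, hC⟩ ⟨D, hD⟩
    exact ⟨C + D, fun w => by rw [map_add]; exact norm_add_le_of_le (hC w) (hD w)⟩
  smul_mem' := by
    rintro a x ⟨C, hC⟩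
    refine ⟨‖a‖ * C, fun w => ?_⟩
    rw [map_smul, norm_smul]
    gcongr
    exact hC w

theorem mem_boundedOrbits {ι E : Type*} [NormedAddCommGroup E] [NormedSpace ℂ E]
    {T : ι → E →L[ℂ] E} {x : E} :
    x ∈ boundedOrbits T ↔ ∃ C, ∀ w : List ι, ‖(w.map T).prod x‖ ≤ C := Iff.rfl

theorem apply_mem_boundedOrbits {ι E : Type*} [NormedAddCommGroup E] [NormedSpace ℂ E]
    {T : ι → E →L[ℂ] E} (k : ι) {x : E} (hx : x ∈ boundedOrbits T) : T k x ∈ boundedOrbits T := by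
  obtain ⟨C, hC⟩ := hx
  exact ⟨C, fun w => by simpa using hC (w ++ [k])⟩

theorem hasMaximalWords {E : Type*} [NormedAddCommGroup E] [NormedSpace ℂ E]
    [FiniteDimensional ℂ E] {T : Fin K → E →L[ℂ] E} (hT : ∀ r > 1, GrowthLE T r)
    (hT' : ∀ r, 0 < r → r < 1 → ¬ GrowthLE T r) : HasMaximalWords T := by
  induction hn : Module.finrank ℂ E using Nat.strong_induction_on generalizing E with
  | _ n ih =>
  cases subsingleton_or_nontrivial E
  · refine absurd ⟨0, fun w => ?_⟩ (hT' (1 / 2) (by norm_num) (by norm_num))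
    rw [Subsingleton.elim (w.map T).prod 0]
    simp
  obtain ⟨x₀, hx₀, hbd⟩ := exists_ne_zero_bounded_orbit hT
  set U := boundedOrbits T with hU
  obtain ⟨F, hF⟩ := U.exists_isCompl
  let i : U →L[ℂ] E := U.subtypeL
  let j : F →L[ℂ] E := F.subtypeL
  let p : E →L[ℂ] U := LinearMap.toContinuousLinearMap (U.projectionOnto F hF)
  let q : E →L[ℂ] F := LinearMap.toContinuousLinearMap (F.projectionOnto U hF.symm)
  have hpi : ∀ x, p (i x) = x := fun x => by simp [p, i]
  have hqj : ∀ x, q (j x) = x := fun x => by simp [q, j]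
  have hqi : ∀ x, x ∈ U → q x = 0 := fun x hx => by simpa [q] using hx
  have hsum : ∀ x, i (p x) + j (q x) = x := fun x => by
    simpa [i, j, p, q] using Submodule.projection_add_projection_eq_self hF x
  let R : Fin K → U →L[ℂ] U := fun k => p ∘L T k ∘L i
  let Q : Fin K → F →L[ℂ] F := fun k => q ∘L T k ∘L j
  have hR : ∀ k, T k ∘L i = i ∘L R k := by
    intro k
    ext x
    have h₁ := apply_mem_boundedOrbits k x.2
    have h₂ := hpi ⟨_, h₁⟩
    exact (congrArg Subtype.val h₂).symm
  have hQ : ∀ k, q ∘L T k = Q k ∘L q := by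
    intro k
    ext1 x
    have h₁ := hqi _ (apply_mem_boundedOrbits k (p x).2)
    simp only [Q, ContinuousLinearMap.comp_apply]
    conv_lhs => rw [← hsum x, map_add, map_add]
    exact add_eq_right.2 h₁
  have hRw : ∀ w : List (Fin K), (w.map R).prod = p ∘L (w.map T).prod ∘L i := by
    intro w
    rw [prod_comp_of_comp_eq hR]
    ext1 x
    exact (hpi _).symm
  have hQw : ∀ w : List (Fin K), (w.map Q).prod = q ∘L (w.map T).prod ∘L j := by
    intro w
    rw [← ContinuousLinearMap.comp_assoc, prod_comp_eq_of_comp_eq hQ]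
    ext1 x
    simp [hqj]
  obtain ⟨M, hM⟩ : ∃ M, ∀ w : List (Fin K), ‖(w.map R).prod‖ ≤ M := by
    refine banach_steinhaus fun x => ?_
    obtain ⟨C, hC⟩ := x.2
    refine ⟨‖p‖ * C, fun w => ?_⟩
    rw [hRw]
    exact (p.le_opNorm _).trans (by gcongr; exact hC w)
  by_cases hRr : ∀ r, 0 < r → r < 1 → ¬ GrowthLE R r
  · refine (HasMaximalWords.of_bounded hM hRr).of_compression hRw ?_
    rintro w z ⟨x, hx0, hx⟩
    refine ⟨i x, fun h => hx0 (Subtype.ext h), ?_⟩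
    have := DFunLike.congr_fun (prod_comp_of_comp_eq hR w) x
    simp only [ContinuousLinearMap.comp_apply, hx, map_smul] at this
    exact this
  · push Not at hRr
    obtain ⟨r, hr0, hr1, hr⟩ := hRr
    refine (ih _ ?_ (T := Q) (fun s hs => (hT s hs).of_compression hQw) (fun s hs0 hs1 hs => ?_)
      rfl).of_compression hQw ?_
    · have hpos : 0 < Module.finrank ℂ U :=
        Module.finrank_pos_iff_exists_ne_zero.2
          ⟨⟨x₀, hbd⟩, fun h => hx₀ (congrArg Subtype.val h)⟩
      have := Submodule.finrank_add_eq_of_isCompl hF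
      omega
    · have hm : max r s < 1 := max_lt hr1 hs1
      have hm0 : 0 < max r s := lt_max_of_lt_left hr0
      exact hT' ((max r s + 1) / 2) (by linarith) (by linarith)
        (GrowthLE.of_blocks hsum hqj hR hQ hm0 (by linarith) (hr.mono hr0.le (le_max_left _ _))
          (hs.mono hs0.le (le_max_right _ _)))
    · exact fun w z => exists_eigenvector_of_comp_eq (fun x => ⟨j x, hqj x⟩)
        (prod_comp_eq_of_comp_eq hQ w)

end Recursion

section Scaling

theorem map_smul_prod {ι E : Type*} [NormedAddCommGroup E] [NormedSpace ℂ E] (a : ℂ)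
    (T : ι → E →L[ℂ] E) (w : List ι) :
    (w.map fun k => a • T k).prod = a ^ w.length • (w.map T).prod := by
  induction w with
  | nil => simp
  | cons k w ih => simp [ih, smul_smul, pow_succ]

theorem GrowthLE.smul {ι E : Type*} [NormedAddCommGroup E] [NormedSpace ℂ E] {T : ι → E →L[ℂ] E}
    {r : ℝ} (h : GrowthLE T r) (a : ℂ) : GrowthLE (fun k => a • T k) (‖a‖ * r) := by
  obtain ⟨C, hC⟩ := h
  refine ⟨C, fun w => ?_⟩
  rw [map_smul_prod, norm_smul, norm_pow, mul_pow, mul_left_comm]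
  gcongr
  exact hC w

theorem GrowthLE.of_norm_le {ι E : Type*} [NormedAddCommGroup E] [NormedSpace ℂ E]
    {T : ι → E →L[ℂ] E} {r : ℝ} (h : ∀ k, ‖T k‖ ≤ r) : GrowthLE T r := by
  refine ⟨1, fun w => ?_⟩
  induction w with
  | nil => exact ContinuousLinearMap.norm_id_le.trans_eq (by simp)
  | cons k w ih =>
    have hr : 0 ≤ r := (norm_nonneg _).trans (h k)
    rw [one_mul] at ih
    simp only [List.map_cons, List.prod_cons, List.length_cons, one_mul, pow_succ']
    exact (norm_mul_le _ _).trans (by gcongr; exact h k)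

/-- The exponential growth rate `ρ` of a finite family of operators; if it is positive then the
normalized family has maximal words. -/
theorem exists_growth_rate {K : ℕ} {E : Type*} [NormedAddCommGroup E] [NormedSpace ℂ E]
    [FiniteDimensional ℂ E] (T : Fin K → E →L[ℂ] E) :
    ∃ ρ : ℝ, 0 ≤ ρ ∧ (∀ r > ρ, GrowthLE T r) ∧
      (0 < ρ → HasMaximalWords fun k => (ρ⁻¹ : ℂ) • T k) := by
  set A := {r : ℝ | 0 < r ∧ GrowthLE T r} with hA
  have hne : A.Nonempty := by
    refine ⟨1 + ∑ k, ‖T k‖, by positivity, GrowthLE.of_norm_le fun k => ?_⟩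
    have := Finset.single_le_sum (f := fun k => ‖T k‖) (fun k _ => norm_nonneg _)
      (Finset.mem_univ k)
    linarith
  have hbdd : BddBelow A := ⟨0, fun r hr => hr.1.le⟩
  have hup : ∀ r > sInf A, GrowthLE T r := by
    intro r hr
    obtain ⟨s, hs, hsr⟩ := exists_lt_of_csInf_lt hne hr
    exact hs.2.mono hs.1.le hsr.le
  refine ⟨sInf A, le_csInf hne fun r hr => hr.1.le, hup, fun hρ => ?_⟩
  set ρ := sInf A
  refine hasMaximalWords (fun r hr => ?_) fun r hr0 hr1 h => ?_
  · have := (hup (ρ * r) (lt_mul_of_one_lt_right hρ hr)).smul (ρ⁻¹ : ℂ)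
    rwa [norm_inv, Complex.norm_real, Real.norm_of_nonneg hρ.le, inv_mul_cancel_left₀ hρ.ne']
      at this
  · have h₁ := h.smul (ρ : ℂ)
    have hρ' : (ρ : ℂ) ≠ 0 := by exact_mod_cast hρ.ne'
    simp only [smul_inv_smul₀ hρ', Complex.norm_real, Real.norm_of_nonneg hρ.le] at h₁
    have h₂ : ρ ≤ ρ * r := csInf_le hbdd ⟨by positivity, h₁⟩
    nlinarith

end Scaling

section Roots

theorem eventually_rpow_inv_le {C r r' : ℝ} (hr : 0 < r) (hrr' : r < r') :
    ∀ᶠ n : ℕ in atTop, ∀ x : ℝ, 0 ≤ x → x ≤ C * r ^ n → x ^ ((n : ℝ)⁻¹) ≤ r' := by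
  have hr' : 0 < r' := hr.trans hrr'
  have h := (tendsto_pow_atTop_nhds_zero_of_lt_one (r := r / r') (by positivity)
    ((div_lt_one hr').2 hrr')).const_mul C
  rw [mul_zero] at h
  filter_upwards [h.eventually_lt_const one_pos, eventually_ne_atTop 0] with n hn hn0 x hx0 hx
  rw [div_pow, mul_div_assoc', div_lt_one (by positivity)] at hn
  calc x ^ ((n : ℝ)⁻¹) ≤ (r' ^ n) ^ ((n : ℝ)⁻¹) :=
        Real.rpow_le_rpow hx0 (hx.trans hn.le) (by positivity)
    _ = r' := Real.pow_rpow_inv_natCast hr'.le hn0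

theorem eventually_le_rpow_inv {c r r' : ℝ} (hc : 0 < c) (hr' : 0 ≤ r') (hrr' : r' < r) :
    ∀ᶠ n : ℕ in atTop, ∀ x : ℝ, c * r ^ n ≤ x → r' ≤ x ^ ((n : ℝ)⁻¹) := by
  have hr : 0 < r := hr'.trans_lt hrr'
  have h := tendsto_pow_atTop_nhds_zero_of_lt_one (r := r' / r) (by positivity)
    ((div_lt_one hr).2 hrr')
  filter_upwards [h.eventually_lt_const hc, eventually_ne_atTop 0] with n hn hn0 x hx
  rw [div_pow, div_lt_iff₀ (by positivity)] at hn
  calc r' = (r' ^ n) ^ ((n : ℝ)⁻¹) := (Real.pow_rpow_inv_natCast hr' hn0).symm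
    _ ≤ _ := Real.rpow_le_rpow (by positivity) (hn.le.trans hx) (by positivity)

theorem tendsto_rpow_inv_of_growth {x : ℕ → ℝ} {ρ : ℝ} (hρ : 0 ≤ ρ) (hx : ∀ n, 0 ≤ x n)
    (hub : ∀ r > ρ, ∃ C, ∀ n, x n ≤ C * r ^ n) (hlb : 0 < ρ → ∃ c > 0, ∀ n, c * ρ ^ n ≤ x n) :
    Tendsto (fun n : ℕ => x n ^ ((n : ℝ)⁻¹)) atTop (𝓝 ρ) := by
  refine tendsto_order.2 ⟨fun a ha => ?_, fun a ha => ?_⟩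
  · rcases lt_or_ge a 0 with ha0 | ha0
    · exact Eventually.of_forall fun n => ha0.trans_le (Real.rpow_nonneg (hx n) _)
    · obtain ⟨c, hc, hcx⟩ := hlb (ha0.trans_lt ha)
      obtain ⟨b, hab, hb⟩ := exists_between ha
      filter_upwards [eventually_le_rpow_inv hc (ha0.trans hab.le) hb] with n hn
      exact hab.trans_le (hn _ (hcx n))
  · obtain ⟨b, hb, hba⟩ := exists_between ha
    obtain ⟨s, hs, hsb⟩ := exists_between hb
    obtain ⟨C, hC⟩ := hub s hs
    filter_upwards [eventually_rpow_inv_le (C := C) (hρ.trans_lt hs) hsb] with n hn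
    exact (hn _ (hx n) (hC n)).trans_lt hba

end Roots

section Matrices

variable {d K : ℕ}

theorem finWordProd_eq (S : Fin K → Matrix (Fin d) (Fin d) ℂ) {n : ℕ} (w : Fin n → Fin K) :
    finWordProd S w = ((List.ofFn w).map S).prod := by
  simp [finWordProd, List.map_ofFn, Function.comp_def]

theorem wordProd_eq (S : Fin K → Matrix (Fin d) (Fin d) ℂ) (i : ℕ → Fin K) (n : ℕ) :
    wordProd S i n = ((factor i 0 n).map S).prod := by
  simp [wordProd, factor, List.map_ofFn, Function.comp_def]

theorem specRad_nonneg (A : Matrix (Fin d) (Fin d) ℂ) : 0 ≤ specRad A := ENNReal.toReal_nonneg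

/-- A matrix as a continuous linear operator on `ℂ^d`. -/
def toOperator (d : ℕ) : Matrix (Fin d) (Fin d) ℂ ≃ₐ[ℂ] ((Fin d → ℂ) →L[ℂ] (Fin d → ℂ)) :=
  Matrix.toLinAlgEquiv'.trans (Module.End.toContinuousLinearMap (Fin d → ℂ))

theorem spectralRadius_toOperator (A : Matrix (Fin d) (Fin d) ℂ) :
    spectralRadius ℂ (toOperator d A) = spectralRadius ℂ A := by
  simp only [spectralRadius, AlgEquiv.spectrum_eq]

theorem spectralRadius_le_norm_toOperator [NeZero d] (A : Matrix (Fin d) (Fin d) ℂ) :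
    spectralRadius ℂ A ≤ ‖toOperator d A‖₊ := by
  rw [← spectralRadius_toOperator]
  exact spectrum.spectralRadius_le_nnnorm _

theorem specRad_le_norm_toOperator [NeZero d] (A : Matrix (Fin d) (Fin d) ℂ) :
    specRad A ≤ ‖toOperator d A‖ :=
  ENNReal.toReal_le_coe_of_le_coe (spectralRadius_le_norm_toOperator A)

theorem norm_le_specRad [NeZero d] {A : Matrix (Fin d) (Fin d) ℂ} {z : ℂ}
    (h : ∃ x ≠ 0, toOperator d A x = z • x) : ‖z‖ ≤ specRad A := by
  have hz : z ∈ spectrum ℂ A := by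
    obtain ⟨x, hx0, hx⟩ := h
    rw [← AlgEquiv.spectrum_eq (Matrix.toLinAlgEquiv' (R := ℂ) (n := Fin d)) A,
      ← Module.End.hasEigenvalue_iff_mem_spectrum]
    exact Module.End.hasEigenvalue_of_hasEigenvector
      ⟨Module.End.mem_eigenspace_iff.2 hx, hx0⟩
  have h₁ : (‖z‖₊ : ℝ≥0∞) ≤ spectralRadius ℂ A :=
    le_iSup₂ (f := fun k (_ : k ∈ spectrum ℂ A) => (‖k‖₊ : ℝ≥0∞)) z hz
  have h₂ : spectralRadius ℂ A ≠ ⊤ :=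
    ne_top_of_le_ne_top ENNReal.coe_ne_top (spectralRadius_le_norm_toOperator A)
  simpa [specRad] using ENNReal.toReal_mono h₂ h₁

theorem genSpecRad_eq [NeZero K] {S : Fin K → Matrix (Fin d) (Fin d) ℂ} {ρ : ℝ} (hρ : 0 ≤ ρ)
    (hub : ∀ r > ρ, ∃ C, ∀ w : List (Fin K), specRad (w.map S).prod ≤ C * r ^ w.length)
    (hlb : 0 < ρ → ∃ c > 0, ∀ N, ∃ w : List (Fin K), N ≤ w.length ∧
      c * ρ ^ w.length ≤ specRad (w.map S).prod) : genSpecRad S = ρ := by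
  set u : ℕ → ℝ := fun n => ⨆ w : Fin n → Fin K, specRad (finWordProd S w) ^ ((n : ℝ)⁻¹) with hu
  have hu0 : ∀ n, 0 ≤ u n := fun n => Real.iSup_nonneg fun w =>
    Real.rpow_nonneg (specRad_nonneg _) _
  have hbdd : ∀ r > ρ, ∀ᶠ n in atTop, u n ≤ r := by
    intro r hr
    obtain ⟨s, hs, hsr⟩ := exists_between hr
    obtain ⟨C, hC⟩ := hub s hs
    filter_upwards [eventually_rpow_inv_le (C := C) (hρ.trans_lt hs) hsr] with n hn
    refine ciSup_le fun w => hn _ (specRad_nonneg _) ?_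
    simpa [finWordProd_eq] using hC (List.ofFn w)
  have hB : atTop.IsBoundedUnder (· ≤ ·) u := ⟨ρ + 1, hbdd _ (lt_add_one ρ)⟩
  have hC : atTop.IsCoboundedUnder (· ≤ ·) u :=
    (isBoundedUnder_of ⟨0, hu0⟩ : atTop.IsBoundedUnder (· ≥ ·) u).isCoboundedUnder_le
  change limsup u atTop = ρ
  refine le_antisymm (le_of_forall_gt_imp_ge_of_dense fun r hr => limsup_le_of_le hC (hbdd r hr)) ?_
  refine le_of_forall_lt_imp_le_of_dense fun a ha => ?_
  rcases lt_or_ge a 0 with ha0 | ha0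
  · exact le_limsup_of_frequently_le (Frequently.of_forall fun n => ha0.le.trans (hu0 n)) hB
  · obtain ⟨c, hc, hw⟩ := hlb (ha0.trans_lt ha)
    obtain ⟨N₀, hN₀⟩ := eventually_atTop.1 (eventually_le_rpow_inv hc ha0 ha)
    refine le_limsup_of_frequently_le (frequently_atTop.2 fun N => ?_) hB
    obtain ⟨w, hwN, hwc⟩ := hw (max N N₀)
    refine ⟨w.length, (le_max_left _ _).trans hwN, ?_⟩
    have h₁ : finWordProd S w.get = (w.map S).prod := by rw [finWordProd_eq, List.ofFn_get]
    refine (hN₀ _ ((le_max_right _ _).trans hwN) _ hwc).trans ?_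
    rw [← h₁]
    exact le_ciSup (f := fun v : Fin w.length → Fin K =>
      specRad (finWordProd S v) ^ ((w.length : ℝ)⁻¹)) (Set.finite_range _).bddAbove w.get

/-- Any two norms on a finite-dimensional space are equivalent. -/
theorem exists_norm_equivalence {V W : Type*} [AddCommGroup V] [Module ℂ V]
    [FiniteDimensional ℂ V] [NormedAddCommGroup W] [NormedSpace ℂ W] (e : V ≃ₗ[ℂ] W)
    {N : V → ℝ} (h0 : ∀ x, 0 ≤ N x) (hdef : ∀ x, N x = 0 ↔ x = 0)
    (hsmul : ∀ (a : ℂ) x, N (a • x) = ‖a‖ * N x) (hadd : ∀ x y, N (x + y) ≤ N x + N y) :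
    ∃ a > 0, ∃ b > 0, ∀ x, N x ≤ a * ‖e x‖ ∧ b * ‖e x‖ ≤ N x := by
  let : Norm V := ⟨N⟩
  have core : NormedSpace.Core ℂ V := ⟨⟨h0, hsmul, hadd⟩, hdef⟩
  let : NormedAddCommGroup V := NormedAddCommGroup.ofCore core
  let : NormedSpace ℂ V := NormedSpace.ofCore core
  have : FiniteDimensional ℂ W := e.finiteDimensional
  let f : V ≃L[ℂ] W := e.toContinuousLinearEquiv
  refine ⟨‖(f.symm : W →L[ℂ] V)‖ + 1, by positivity, (‖(f : V →L[ℂ] W)‖ + 1)⁻¹, by positivity,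
    fun x => ⟨?_, ?_⟩⟩
  · have h₁ : ‖x‖ ≤ ‖(f.symm : W →L[ℂ] V)‖ * ‖f x‖ := by
      simpa using (f.symm : W →L[ℂ] V).le_opNorm (f x)
    calc N x ≤ ‖(f.symm : W →L[ℂ] V)‖ * ‖f x‖ := h₁
      _ ≤ _ := by
        change _ ≤ (‖(f.symm : W →L[ℂ] V)‖ + 1) * ‖f x‖
        gcongr
        simp
  · have h₁ : ‖f x‖ ≤ ‖(f : V →L[ℂ] W)‖ * ‖x‖ := (f : V →L[ℂ] W).le_opNorm x
    rw [inv_mul_le_iff₀ (by positivity)]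
    change ‖f x‖ ≤ (‖(f : V →L[ℂ] W)‖ + 1) * ‖x‖
    linarith [norm_nonneg x]

theorem continuous_shift (K : ℕ) : Continuous (shift K) :=
  continuous_pi fun n => continuous_apply (n + 1)

theorem factor_shift (i : ℕ → Fin K) (m n : ℕ) : factor (shift K i) m n = factor i (m + 1) n := by
  simp only [factor, shift]
  congr! 3 with t
  omega

theorem isClosed_setOf_forall_le_factor (g : List (Fin K) → ℝ) (c : ℝ) :
    IsClosed {i : ℕ → Fin K | ∀ m n, c ≤ g (factor i m n)} := by
  simp only [Set.ofPred_forall]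
  refine isClosed_iInter fun m => isClosed_iInter fun n => isClosed_le continuous_const ?_
  have h₁ : Continuous fun v : Fin n → Fin K => g (List.ofFn v) := continuous_of_discreteTopology
  exact h₁.comp (continuous_pi fun t => continuous_apply (m + t))

end Matrices

/-- There always exists an ergodic probability measure on `Σ_K^+` extremal for `S`. -/
theorem exists_extremal_ergodic_measure
    {d K : ℕ} (hd : 2 ≤ d) (hK : 2 ≤ K)
    (S : Fin K → Matrix (Fin d) (Fin d) ℂ) (ν : MatrixNorm d) :
    ∃ μ : Measure (ℕ → Fin K), IsProbabilityMeasure μ ∧ Ergodic (shift K) μ ∧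
      IsExtremal S ν.N μ := by
  have : NeZero d := ⟨by omega⟩
  have : NeZero K := ⟨by omega⟩
  obtain ⟨ρ, hρ, hub, hmax⟩ := exists_growth_rate fun k => toOperator d (S k)
  have hΛ : ∀ w : List (Fin K), (w.map fun k => toOperator d (S k)).prod
      = toOperator d (w.map S).prod := by
    intro w
    rw [map_list_prod, List.map_map]
    rfl
  simp only [GrowthLE, hΛ] at hub
  have hscale : ∀ w : List (Fin K), (w.map fun k => (ρ⁻¹ : ℂ) • toOperator d (S k)).prod
      = (ρ⁻¹ : ℂ) ^ w.length • toOperator d (w.map S).prod := by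
    intro w
    rw [map_smul_prod, hΛ]
  have hgen : genSpecRad S = ρ := by
    refine genSpecRad_eq hρ (fun r hr => ?_) fun hρ0 => ⟨1 / 2, by norm_num, fun N => ?_⟩
    · obtain ⟨C, hC⟩ := hub r hr
      exact ⟨C, fun w => (specRad_le_norm_toOperator _).trans (hC w)⟩
    · obtain ⟨w, hw, z, hz, x, hx0, hx⟩ := (hmax hρ0).2 N
      have hρ' : (ρ : ℂ) ≠ 0 := by exact_mod_cast hρ0.ne'
      refine ⟨w, hw, le_trans ?_ (norm_le_specRad (z := (ρ : ℂ) ^ w.length * z) ⟨x, hx0, ?_⟩)⟩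
      · rw [norm_mul, norm_pow, Complex.norm_real, Real.norm_of_nonneg hρ, mul_comm]
        gcongr
      · rw [hscale, _root_.smul_apply] at hx
        rw [mul_smul, ← hx, smul_smul, ← mul_pow, mul_inv_cancel₀ hρ', one_pow, one_smul]
  obtain ⟨a, ha, b, hb, hab⟩ := exists_norm_equivalence (toOperator d).toLinearEquiv ν.nonneg
    ν.definite ν.homog ν.triangle
  simp only [AlgEquiv.toLinearEquiv_apply] at hab
  have hlim : ∀ i : ℕ → Fin K, (0 < ρ → ∃ c > 0, ∀ n,
      c * ρ ^ n ≤ ‖toOperator d (wordProd S i n)‖) →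
      Tendsto (fun n : ℕ => ν.N (wordProd S i n) ^ ((n : ℝ)⁻¹)) atTop (𝓝 (genSpecRad S)) := by
    intro i hi
    rw [hgen]
    refine tendsto_rpow_inv_of_growth hρ (fun n => ν.nonneg _) (fun r hr => ?_) fun hρ0 => ?_
    · obtain ⟨C, hC⟩ := hub r hr
      refine ⟨a * C, fun n => (hab _).1.trans ?_⟩
      rw [mul_assoc]
      gcongr
      simpa [wordProd_eq] using hC (factor i 0 n)
    · obtain ⟨c, hc, hcn⟩ := hi hρ0
      refine ⟨b * c, by positivity, fun n => le_trans ?_ (hab _).2⟩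
      rw [mul_assoc]
      gcongr
      exact hcn n
  obtain ⟨X, hX, hne, hmaps, hXρ⟩ : ∃ X : Set (ℕ → Fin K), IsClosed X ∧ X.Nonempty ∧
      Set.MapsTo (shift K) X X ∧ ∀ i ∈ X, 0 < ρ → ∃ c > 0, ∀ n,
        c * ρ ^ n ≤ ‖toOperator d (wordProd S i n)‖ := by
    rcases hρ.eq_or_lt with hρ0 | hρ0
    · exact ⟨Set.univ, isClosed_univ, Set.univ_nonempty, Set.mapsTo_univ _ _,
        fun i _ h => absurd hρ0 h.ne⟩
    · obtain ⟨⟨c, hc, i₀, hi₀⟩, -⟩ := hmax hρ0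
      refine ⟨_, isClosed_setOf_forall_le_factor
        (fun w => ‖(w.map fun k => (ρ⁻¹ : ℂ) • toOperator d (S k)).prod‖) c, ⟨i₀, hi₀⟩,
        fun i hi m n => ?_, fun i hi _ => ⟨c, hc, fun n => ?_⟩⟩
      · rw [factor_shift]
        exact hi (m + 1) n
      · have := hi 0 n
        rw [hscale, norm_smul, length_factor, norm_pow, norm_inv, Complex.norm_real,
          Real.norm_of_nonneg hρ, inv_pow, inv_mul_eq_div, le_div_iff₀ (by positivity),
          ← wordProd_eq] at this
        exact this
  obtain ⟨μ, hμ, herg, hμX⟩ :=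
    exists_ergodic_of_isCompact (continuous_shift K) hX.isCompact hne hmaps
  exact ⟨μ, hμ, herg, hμX.mono fun i hi => hlim i (hXρ i hi)⟩
end
end
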